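/- arXiv:2503.18691 — 2 statements merged into one kernel-verified Lean document; each statement's English description precedes it below -/
import Mathlib

section
/- Assume S ⊆ ℝ is discrete, Y ⊆ ℝ^k is a closed perfect set, Z ⊆ ℝ∖{0} is compact, and λY is gap-rich with exceptional set S for every λ ∈ Z. For any x ∈ per(ℤ,Y) of minimal period p, any ε > 0, and any compact K ⊆ ℝ∖S, there exist constants N₀ = N₀(x,K,ε,Z) ∈ ℕ and c₀ = c₀(x,K,ε,Z) > 0 such that for every N ≥ N₀ there exists y ∈ per(ℤ,Y) of period Np with sup_{j∈ℤ} d(x_j, y_j) < ε and Leb(K ∩ σ(H_{λy})) ≤ e^{−c₀N} for all λ ∈ Z, where Leb denotes Lebesgue measure on ℝ. -/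
/-!
Throughout, a gap of `H_W` at `E` is expressed by a lower bound `g ‖u‖² ≤ ‖(H_W - E) u‖²` with
`g > 0`; for a bounded self-adjoint operator this is equivalent to `E ∉ σ(H_W)`
(`notMem_spectrum_of_lowerBound`, `exists_lowerBound`).

For `(E, λ) ∈ K × Z`, gap-richness of `λY` gives a potential `ε`-close to `x` with a gap at `E` for
the coupling `λ`, and the gap survives for nearby energies and couplings (`local_gap`). By
compactness, finitely many potentials `y₁, …, y_M` and one constant `g` serve all of `K × Z`. The
approximant `y` has period `Np`, and one period consists of a stretch of `8mp` blocks of each `y_i`,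
with `m` proportional to `N`, followed by `x`.

Suppose `E` lies in a gap of `λy_i`. Testing the lower bound for `λy_i` on truncations of `u` shows
that the mass of `u` at the middle of the `i`-th stretch is at most `κ^m` times its mass on the
stretch, plus `(2/g)` times that of `(H_{λy} - E) u`, with `κ = 2/(2+g)` (`decay_step`, `decay`).
Cutting the bond at the middle of the `i`-th stretch in every period therefore changes `H_{λy} - E`
by an exponentially small amount. The cut operator is a direct sum of copies of a single `q × q`
Jacobi matrix, `q = Npk`, so if `E` is farther than `δ = 4 κ^{m/2}` from its `q` eigenvalues,
then `H_{λy} - E` is bounded below (`lowerBound_of_block`). Hence `K ∩ σ(H_{λy})` is covered by `Mq`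
intervals of length `2δ` (`volume_spectrum_le`), whose total length is exponentially small in `N`
(`exists_rate`).
-/

open Set MeasureTheory BoundedContinuousFunction

noncomputable section

/-- ℓ²(ℤ; ℝ). -/
abbrev Ell2 : Type := lp (fun _ : ℤ => ℝ) 2

/-- Spectrum of the discrete Schrödinger operator `H_W = Δ + W` on `ℓ²(ℤ)`:
`E` lies in the spectrum iff `H_W - E` is not a linear bijection of `ℓ²(ℤ)`
(for bounded `W`, by the open mapping theorem this is equivalent to `H_W - E`
not being boundedly invertible). -/
def SchrodingerSpectrum (W : ℤ → ℝ) : Set ℝ :=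
  {E : ℝ | ¬ ∃ T : Ell2 ≃ₗ[ℝ] Ell2,
      ∀ f : Ell2, ∀ n : ℤ,
        (T f) n = f (n - 1) + f (n + 1) + (W n - E) * f n}

/-- A Cantor set of zero Hausdorff dimension: nonempty, compact, without isolated
points, with empty interior, and of Hausdorff dimension zero. -/
def IsZeroDimCantor (s : Set ℝ) : Prop :=
  s.Nonempty ∧ IsCompact s ∧ Preperfect s ∧ interior s = ∅ ∧ dimH s = 0

/-- Periodic bounded sequences. -/
def IsPeriodicSeq {α : Type*} [PseudoMetricSpace α] (W : ℤ →ᵇ α) : Prop :=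
  ∃ q : ℕ, 0 < q ∧ ∀ n : ℤ, W (n + q) = W n

/-- The limit-periodic functions `ℤ → ℝ`: uniform limits of periodic functions. -/
def LPZ : Set (ℤ →ᵇ ℝ) := closure {W : ℤ →ᵇ ℝ | IsPeriodicSeq W}

/-- A subset of ℝ is discrete if it has no accumulation points. -/
def IsDiscreteSet (S : Set ℝ) : Prop := ∀ x : ℝ, ¬ AccPt x (Filter.principal S)

/-- Periodic extension `w^{♯ℤ}` of a finite word `w`. -/
def perExt {α : Type*} [Zero α] {m : ℕ} (w : Fin m → α) : ℤ → α :=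
  fun n =>
    if h : 0 < m then
      w ⟨(n % (m : ℤ)).toNat, by
        have h1 : 0 ≤ n % (m : ℤ) := Int.emod_nonneg n (by exact_mod_cast h.ne')
        have h2 : n % (m : ℤ) < (m : ℤ) := Int.emod_lt_of_pos n (by exact_mod_cast h)
        omega⟩
    else 0

/-- Aggregation `y^♮` of a sequence of blocks in `ℝ^k` into a potential `ℤ → ℝ`. -/
def agg (k : ℕ) (x : ℤ → (Fin k → ℝ)) : ℤ → ℝ :=
  fun n =>
    if h : 0 < k then
      x (Int.fdiv n k) ⟨(n % (k : ℤ)).toNat, by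
        have h1 : 0 ≤ n % (k : ℤ) := Int.emod_nonneg n (by exact_mod_cast h.ne')
        have h2 : n % (k : ℤ) < (k : ℤ) := Int.emod_lt_of_pos n (by exact_mod_cast h)
        omega⟩
    else 0

/-- `Y ⊆ ℝ^k` is gap-rich with exceptional set `S`: `S` is discrete and near any
word over `Y` there is a word over `Y` whose periodic Schrödinger operator has a
gap at any prescribed energy `E ∉ S`. -/
def GapRich (k : ℕ) (Y : Set (Fin k → ℝ)) (S : Set ℝ) : Prop :=
  IsDiscreteSet S ∧
  ∀ E : ℝ, E ∉ S → ∀ m : ℕ, 0 < m → ∀ x : Fin m → (Fin k → ℝ), (∀ i, x i ∈ Y) →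
    ∀ ε : ℝ, 0 < ε →
      ∃ l : ℕ, 0 < l ∧ ∃ y : Fin l → (Fin k → ℝ),
        (∀ i, y i ∈ Y) ∧
        (∀ j : ℤ, dist (perExt x j) (perExt y j) < ε) ∧
        E ∉ SchrodingerSpectrum (agg k (perExt y))

/-- The periodic elements of `Y^ℤ`. -/
def PerY (k : ℕ) (Y : Set (Fin k → ℝ)) : Set (ℤ →ᵇ (Fin k → ℝ)) :=
  {x | IsPeriodicSeq x ∧ ∀ n : ℤ, x n ∈ Y}

/-- The limit-periodic elements of `Y^ℤ`: uniform limits of periodic elements. -/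
def LPY (k : ℕ) (Y : Set (Fin k → ℝ)) : Set (ℤ →ᵇ (Fin k → ℝ)) := closure (PerY k Y)

/-! ### The operator on sequences and lower bounds -/

/-- The sequence `(H_W - E) u`, for an arbitrary sequence `u : ℤ → ℝ`. -/
def schr (W : ℤ → ℝ) (E : ℝ) (u : ℤ → ℝ) (n : ℤ) : ℝ :=
  u (n - 1) + u (n + 1) + (W n - E) * u n

/-- `H_W - E` is bounded below on `ℓ²(ℤ)`: `g ‖u‖² ≤ ‖(H_W - E) u‖²`. For bounded `W` and
`g > 0` this means that `E` is at distance at least `√g` from the spectrum. -/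
def LowerBound (W : ℤ → ℝ) (E g : ℝ) : Prop :=
  ∀ u : ℤ → ℝ, Summable (fun n => u n ^ 2) →
    g * ∑' n, u n ^ 2 ≤ ∑' n, schr W E u n ^ 2

lemma summable_shift {f : ℤ → ℝ} (hf : Summable f) (a : ℤ) : Summable (fun n => f (n + a)) :=
  (Equiv.addRight a).summable_iff.mpr hf

lemma tsum_shift (f : ℤ → ℝ) (a : ℤ) : ∑' n, f (n + a) = ∑' n, f n :=
  (Equiv.addRight a).tsum_eq f

lemma schr_sq_le {W : ℤ → ℝ} {E A : ℝ} (hW : ∀ n, |W n - E| ≤ A) (u : ℤ → ℝ) (n : ℤ) :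
    schr W E u n ^ 2 ≤ 3 * u (n + -1) ^ 2 + 3 * u (n + 1) ^ 2 + 3 * A ^ 2 * u n ^ 2 := by
  have h1 : (W n - E) ^ 2 ≤ A ^ 2 := sq_le_sq' (by linarith [abs_le.mp (hW n)])
    (by linarith [abs_le.mp (hW n)])
  have h2 := mul_le_mul_of_nonneg_right h1 (sq_nonneg (u n))
  unfold schr
  rw [← sub_eq_add_neg]
  nlinarith [sq_nonneg (u (n - 1) - u (n + 1)), sq_nonneg (u (n - 1) - (W n - E) * u n),
    sq_nonneg (u (n + 1) - (W n - E) * u n)]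

lemma summable_schr {W : ℤ → ℝ} {E A : ℝ} (hW : ∀ n, |W n - E| ≤ A) {u : ℤ → ℝ}
    (hu : Summable (fun n => u n ^ 2)) : Summable (fun n => schr W E u n ^ 2) := by
  refine Summable.of_nonneg_of_le (fun n => sq_nonneg _) (schr_sq_le hW u) ?_
  exact (((summable_shift hu (-1)).mul_left 3).add ((summable_shift hu 1).mul_left 3)).add
    (hu.mul_left _)

lemma tsum_schr_le {W : ℤ → ℝ} {E A : ℝ} (hW : ∀ n, |W n - E| ≤ A) {u : ℤ → ℝ}
    (hu : Summable (fun n => u n ^ 2)) :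
    ∑' n, schr W E u n ^ 2 ≤ (6 + 3 * A ^ 2) * ∑' n, u n ^ 2 := by
  have h1 := (summable_shift hu (-1)).mul_left 3
  have h2 := (summable_shift hu 1).mul_left 3
  have h3 := hu.mul_left (3 * A ^ 2)
  calc ∑' n, schr W E u n ^ 2
      ≤ ∑' n, (3 * u (n + -1) ^ 2 + 3 * u (n + 1) ^ 2 + 3 * A ^ 2 * u n ^ 2) :=
        (summable_schr hW hu).tsum_le_tsum (schr_sq_le hW u) ((h1.add h2).add h3)
    _ = (6 + 3 * A ^ 2) * ∑' n, u n ^ 2 := by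
        rw [(h1.add h2).tsum_add h3, h1.tsum_add h2, tsum_mul_left, tsum_mul_left, tsum_mul_left,
          tsum_shift (fun n => u n ^ 2) (-1), tsum_shift (fun n => u n ^ 2) 1]
        ring

lemma ell2_summable (f : Ell2) : Summable (fun n => f n ^ 2) := by
  have := (memℓp_gen_iff (p := 2) (by norm_num)).1 (lp.memℓp f)
  simpa using this

lemma ell2_norm_sq (f : Ell2) : ‖f‖ ^ 2 = ∑' n, f n ^ 2 := by
  have := lp.norm_rpow_eq_tsum (p := 2) (by norm_num) f
  simpa using this

lemma ell2_mem {u : ℤ → ℝ} (hu : Summable (fun n => u n ^ 2)) :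
    Memℓp (E := fun _ : ℤ => ℝ) u 2 :=
  memℓp_gen (by simpa using hu)

/-- `H_W - E` as a bounded operator on `ℓ²(ℤ)`, for bounded `W`. -/
def schrCLM (W : ℤ → ℝ) (E A : ℝ) (hW : ∀ n, |W n - E| ≤ A) : Ell2 →L[ℝ] Ell2 :=
  LinearMap.mkContinuous
    { toFun := fun f => ⟨schr W E f, ell2_mem (summable_schr hW (ell2_summable f))⟩
      map_add' := fun f g => by
        ext n
        simp only [schr, lp.coeFn_add, Pi.add_apply]
        ring
      map_smul' := fun c f => by
        ext n
        simp only [schr, lp.coeFn_smul, Pi.smul_apply, smul_eq_mul, RingHom.id_apply]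
        ring }
    (√(6 + 3 * A ^ 2)) (fun f => by
      refine abs_le_of_sq_le_sq' ?_ (by positivity) |>.2
      rw [mul_pow, Real.sq_sqrt (by positivity), ell2_norm_sq, ell2_norm_sq]
      exact tsum_schr_le hW (ell2_summable f))

lemma schrCLM_apply (W : ℤ → ℝ) (E A : ℝ) (hW : ∀ n, |W n - E| ≤ A) (f : Ell2) (n : ℤ) :
    schrCLM W E A hW f n = schr W E f n := rfl

lemma norm_schrCLM_sq (W : ℤ → ℝ) (E A : ℝ) (hW : ∀ n, |W n - E| ≤ A) (f : Ell2) :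
    ‖schrCLM W E A hW f‖ ^ 2 = ∑' n, schr W E f n ^ 2 := by
  rw [ell2_norm_sq]; rfl

lemma summable_mul_of_sq {u v : ℤ → ℝ} (hu : Summable (fun n => u n ^ 2))
    (hv : Summable (fun n => v n ^ 2)) : Summable (fun n => u n * v n) := by
  refine Summable.of_norm_bounded (hu.add hv) (fun n => ?_)
  rw [Real.norm_eq_abs, abs_le]
  constructor <;> nlinarith [sq_nonneg (u n + v n), sq_nonneg (u n - v n)]

lemma schrCLM_symm (W : ℤ → ℝ) (E A : ℝ) (hW : ∀ n, |W n - E| ≤ A) (f h : Ell2) :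
    inner ℝ (schrCLM W E A hW f) h = inner ℝ f (schrCLM W E A hW h) := by
  rw [lp.inner_eq_tsum, lp.inner_eq_tsum]
  simp only [schrCLM_apply, RCLike.inner_apply, conj_trivial]
  have hf := ell2_summable f
  have hh := ell2_summable h
  have hWs : ∀ w : Ell2, Summable (fun n => ((W n - E) * w n) ^ 2) := fun w => by
    refine Summable.of_nonneg_of_le (fun n => sq_nonneg _) (fun n => ?_)
      ((ell2_summable w).mul_left (A ^ 2))
    rw [mul_pow]
    exact mul_le_mul_of_nonneg_right (sq_le_sq' (by linarith [abs_le.mp (hW n)])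
      (by linarith [abs_le.mp (hW n)])) (sq_nonneg _)
  have s1 : Summable (fun n => h (n + 1) * f n) := summable_mul_of_sq (summable_shift hh 1) hf
  have s2 : Summable (fun n => h n * f (n + 1)) := summable_mul_of_sq hh (summable_shift hf 1)
  have s3 : Summable (fun n => h n * ((W n - E) * f n)) := summable_mul_of_sq hh (hWs f)
  have s1' := summable_shift s1 (-1)
  have s2' := summable_shift s2 (-1)
  have e1 := tsum_shift (fun n => h (n + 1) * f n) (-1)
  have e2 := tsum_shift (fun n => h n * f (n + 1)) (-1)
  calc ∑' n, h n * schr W E f n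
      = ∑' n, (h (n + -1 + 1) * f (n + -1) + h n * f (n + 1) + h n * ((W n - E) * f n)) := by
        refine tsum_congr fun n => ?_
        rw [neg_add_cancel_right, ← sub_eq_add_neg, schr]; ring
    _ = ∑' n, (h (n + -1) * f (n + -1 + 1) + h (n + 1) * f n + h n * ((W n - E) * f n)) := by
        rw [(s1'.add s2).tsum_add s3, (s2'.add s1).tsum_add s3, s1'.tsum_add s2, s2'.tsum_add s1,
          e1, e2]
        ring
    _ = ∑' n, schr W E h n * f n := by
        refine tsum_congr fun n => ?_
        rw [neg_add_cancel_right, ← sub_eq_add_neg, schr]; ring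

/-- A self-adjoint operator that is bounded below is bijective. -/
lemma notMem_spectrum_of_lowerBound {W : ℤ → ℝ} {E A g : ℝ} (hW : ∀ n, |W n - E| ≤ A)
    (hg : 0 < g) (h : LowerBound W E g) : E ∉ SchrodingerSpectrum W := by
  set T := schrCLM W E A hW with hT
  have hb : ∀ f, √g * ‖f‖ ≤ ‖T f‖ := fun f => by
    refine abs_le_of_sq_le_sq' ?_ (norm_nonneg _) |>.2
    rw [mul_pow, Real.sq_sqrt hg.le, norm_schrCLM_sq, ell2_norm_sq]
    exact h f (ell2_summable f)
  have hsg : 0 < √g := Real.sqrt_pos.mpr hg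
  have hanti : AntilipschitzWith (Real.toNNReal (√g)⁻¹) T := by
    refine T.antilipschitz_of_bound (fun f => ?_)
    rw [Real.coe_toNNReal _ (by positivity), inv_mul_eq_div, le_div_iff₀ hsg, mul_comm]
    exact hb f
  have hinj : Function.Injective T := hanti.injective
  have hclosed : IsClosed (T.range : Set Ell2) := hanti.isClosed_range T.uniformContinuous
  have hsurj : T.range = ⊤ := by
    have : CompleteSpace T.range := hclosed.completeSpace_coe
    rw [← Submodule.orthogonal_eq_bot_iff, Submodule.eq_bot_iff]
    intro v hv
    rw [Submodule.mem_orthogonal] at hv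
    have h0 : T v = 0 := by
      rw [← inner_self_eq_zero (𝕜 := ℝ), ← hv (T (T v)) ⟨T v, rfl⟩, hT, schrCLM_symm]
      simp only [schrCLM_symm]
    exact hinj (h0.trans T.map_zero.symm)
  have hsurj' : Function.Surjective T := LinearMap.range_eq_top.mp hsurj
  intro hE
  exact hE ⟨LinearEquiv.ofBijective (T : Ell2 →ₗ[ℝ] Ell2) ⟨hinj, hsurj'⟩, fun f n => rfl⟩

/-- The converse of `notMem_spectrum_of_lowerBound`, by the open mapping theorem. -/
lemma exists_lowerBound {W : ℤ → ℝ} {E A : ℝ} (hW : ∀ n, |W n - E| ≤ A)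
    (h : E ∉ SchrodingerSpectrum W) : ∃ g : ℝ, 0 < g ∧ LowerBound W E g := by
  simp only [SchrodingerSpectrum, mem_ofPred_eq, not_not] at h
  obtain ⟨T₀, hT₀⟩ := h
  set T := schrCLM W E A hW with hT
  have hTT : ∀ f, T f = T₀ f := fun f => by
    ext n; rw [hT₀]; rfl
  have hbij : Function.Bijective T := by
    have : (T : Ell2 → Ell2) = T₀ := funext hTT
    rw [this]; exact T₀.bijective
  let e := ContinuousLinearEquiv.ofBijective T (LinearMap.ker_eq_bot.mpr hbij.1)
    (LinearMap.range_eq_top.mpr hbij.2)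
  set C := ‖(e.symm : Ell2 →L[ℝ] Ell2)‖
  have hC : 0 ≤ C := norm_nonneg _
  refine ⟨((C + 1) ^ 2)⁻¹, by positivity, fun u hu => ?_⟩
  let f : Ell2 := ⟨u, ell2_mem hu⟩
  have h1 : ‖f‖ ≤ C * ‖T f‖ := by
    have := (e.symm : Ell2 →L[ℝ] Ell2).le_opNorm (T f)
    have h2 : e.symm (T f) = f := e.symm_apply_apply f
    simpa [h2] using this
  have h2 : ‖f‖ ≤ (C + 1) * ‖T f‖ := by nlinarith [norm_nonneg (T f)]
  have h3 : ‖f‖ ^ 2 ≤ (C + 1) ^ 2 * ‖T f‖ ^ 2 := by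
    rw [← mul_pow]; exact pow_le_pow_left₀ (norm_nonneg _) h2 2
  rw [norm_schrCLM_sq, ell2_norm_sq] at h3
  rw [inv_mul_le_iff₀ (by positivity)]
  exact h3

lemma LowerBound.mono {W : ℤ → ℝ} {E g g' : ℝ} (h : LowerBound W E g) (hg : g' ≤ g) :
    LowerBound W E g' := fun u hu =>
  (mul_le_mul_of_nonneg_right hg (tsum_nonneg fun _ => sq_nonneg _)).trans (h u hu)

lemma LowerBound.shift {W : ℤ → ℝ} {E g : ℝ} (h : LowerBound W E g) (a : ℤ) :
    LowerBound (fun n => W (n + a)) E g := fun u hu => by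
  have := h (fun n => u (n + -a)) (summable_shift hu (-a))
  rw [tsum_shift (fun n => u n ^ 2) (-a), ← tsum_shift (fun n => schr W E _ n ^ 2) a] at this
  refine this.trans_eq (tsum_congr fun n => ?_)
  simp only [schr]
  rw [show n + a - 1 + -a = n - 1 by ring, show n + a + 1 + -a = n + 1 by ring,
    show n + a + -a = n by ring]

/-- Lower bounds are stable under small bounded perturbations of the potential and the energy. -/
lemma LowerBound.perturb {W W' : ℤ → ℝ} {E E' g s A : ℝ} (hW : ∀ n, |W n - E| ≤ A)
    (h : LowerBound W E g) (hs : 4 * s ^ 2 ≤ g)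
    (hd : ∀ n, |(W n - E) - (W' n - E')| ≤ s) : LowerBound W' E' (g / 4) := fun u hu => by
  have hW' : ∀ n, |W' n - E'| ≤ A + s := fun n => by
    have h1 := abs_le.mp (hW n)
    have h2 := abs_le.mp (hd n)
    rw [abs_le]; constructor <;> linarith
  have h1 := h u hu
  have h2 := (summable_schr hW' hu).mul_left 2
  have h3 := hu.mul_left (2 * s ^ 2)
  have h4 : ∑' n, schr W E u n ^ 2 ≤ ∑' n, (2 * schr W' E' u n ^ 2 + 2 * s ^ 2 * u n ^ 2) := by
    refine (summable_schr hW hu).tsum_le_tsum (fun n => ?_) (h2.add h3)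
    have e : schr W E u n = schr W' E' u n + ((W n - E) - (W' n - E')) * u n := by
      simp only [schr]; ring
    have h5 : ((W n - E) - (W' n - E')) ^ 2 * u n ^ 2 ≤ s ^ 2 * u n ^ 2 :=
      mul_le_mul_of_nonneg_right (sq_le_sq' (by linarith [abs_le.mp (hd n)])
        (by linarith [abs_le.mp (hd n)])) (sq_nonneg _)
    rw [e]
    nlinarith [sq_nonneg (schr W' E' u n - ((W n - E) - (W' n - E')) * u n)]
  rw [h2.tsum_add h3, tsum_mul_left, tsum_mul_left] at h4
  have h0 : 0 ≤ ∑' n, u n ^ 2 := tsum_nonneg fun _ => sq_nonneg _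
  nlinarith
/-! ### Exponential decay inside a stretch with a gap -/

lemma sum_Icc_neg_succ (f : ℤ → ℝ) (r : ℕ) :
    ∑ n ∈ Finset.Icc (-((r + 1 : ℕ) : ℤ)) ((r + 1 : ℕ) : ℤ), f n =
      ∑ n ∈ Finset.Icc (-(r : ℤ)) (r : ℤ), f n + f (r + 1) + f (-(r + 1)) := by
  have : Finset.Icc (-((r + 1 : ℕ) : ℤ)) ((r + 1 : ℕ) : ℤ) =
      insert ((r : ℤ) + 1) (insert (-((r : ℤ) + 1)) (Finset.Icc (-(r : ℤ)) (r : ℤ))) := by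
    ext n; simp only [Finset.mem_Icc, Finset.mem_insert]; omega
  rw [this, Finset.sum_insert (by simp only [Finset.mem_insert, Finset.mem_Icc]; omega),
    Finset.sum_insert (by simp only [Finset.mem_Icc]; omega)]
  ring

/-- Testing the lower bound for `W₀` on `u` truncated to `[-(s+1), s+1]`, where `W = W₀`: the
commutator with the truncation only sees `u` at the sites `±(s+1)` and `±(s+2)`. -/
lemma decay_step {W W₀ : ℤ → ℝ} {E g : ℝ} (h : LowerBound W₀ E g) (u : ℤ → ℝ) (s : ℕ)
    (hW : ∀ n : ℤ, -((s : ℤ) + 1) ≤ n → n ≤ (s : ℤ) + 1 → W n = W₀ n) :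
    g * ∑ n ∈ Finset.Icc (-((s + 1 : ℕ) : ℤ)) ((s + 1 : ℕ) : ℤ), u n ^ 2 ≤
      2 * ∑ n ∈ Finset.Icc (-((s + 1 : ℕ) : ℤ)) ((s + 1 : ℕ) : ℤ), schr W E u n ^ 2 +
      2 * (∑ n ∈ Finset.Icc (-((s + 2 : ℕ) : ℤ)) ((s + 2 : ℕ) : ℤ), u n ^ 2 -
        ∑ n ∈ Finset.Icc (-(s : ℤ)) (s : ℤ), u n ^ 2) := by
  set I := Finset.Icc (-((s + 1 : ℕ) : ℤ)) ((s + 1 : ℕ) : ℤ) with hI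
  set J := Finset.Icc (-((s + 2 : ℕ) : ℤ)) ((s + 2 : ℕ) : ℤ) with hJ
  have memI : ∀ n : ℤ, n ∈ I ↔ -((s : ℤ) + 1) ≤ n ∧ n ≤ (s : ℤ) + 1 := fun n => by
    rw [hI, Finset.mem_Icc]; push_cast; rfl
  have memJ : ∀ n : ℤ, n ∈ J ↔ -((s : ℤ) + 2) ≤ n ∧ n ≤ (s : ℤ) + 2 := fun n => by
    rw [hJ, Finset.mem_Icc]; push_cast; rfl
  have hIJ : I ⊆ J := fun n hn => by rw [memI] at hn; rw [memJ]; omega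
  set v : ℤ → ℝ := fun n => if n ∈ I then u n else 0 with hv
  have v0 : ∀ n, n ∉ I → v n = 0 := fun n hn => by simp [hv, hn]
  have v1 : ∀ n, n ∈ I → v n = u n := fun n hn => by simp [hv, hn]
  have hvz : ∀ n, n ∉ I → v n ^ 2 = 0 := fun n hn => by rw [v0 n hn]; norm_num
  have hsum : Summable (fun n => v n ^ 2) := summable_of_ne_finset_zero (s := I) hvz
  have key := h v hsum
  have hsz : ∀ n, n ∉ J → schr W₀ E v n ^ 2 = 0 := fun n hn => by
    rw [memJ] at hn
    rw [schr, v0 n (by rw [memI]; omega), v0 (n - 1) (by rw [memI]; omega),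
      v0 (n + 1) (by rw [memI]; omega)]
    norm_num
  rw [tsum_eq_sum hvz, tsum_eq_sum hsz,
    Finset.sum_congr rfl (fun n hn => by rw [v1 n hn] : ∀ n ∈ I, v n ^ 2 = u n ^ 2)] at key
  refine key.trans ?_
  have pt : ∀ n ∈ J, schr W₀ E v n ^ 2 ≤ 2 * (if n ∈ I then schr W E u n ^ 2 else 0) +
      2 * ((if n = (s : ℤ) + 1 then u (s + 2) ^ 2 else 0) +
        (if n = -((s : ℤ) + 1) then u (-(s + 2)) ^ 2 else 0) +
        (if n = (s : ℤ) + 2 then u (s + 1) ^ 2 else 0) +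
        (if n = -((s : ℤ) + 2) then u (-(s + 1)) ^ 2 else 0)) := by
    intro n hn
    rw [memJ] at hn
    rcases eq_or_ne n ((s : ℤ) + 2) with h1 | h1
    · rw [if_neg (by rw [memI]; omega), if_neg (by omega), if_neg (by omega), if_pos h1,
        if_neg (by omega), schr, v0 n (by rw [memI]; omega), v0 (n + 1) (by rw [memI]; omega),
        v1 (n - 1) (by rw [memI]; omega), show n - 1 = (s : ℤ) + 1 by omega]
      nlinarith [sq_nonneg (u (s + 1))]
    rcases eq_or_ne n (-((s : ℤ) + 2)) with h2 | h2
    · rw [if_neg (by rw [memI]; omega), if_neg (by omega), if_neg (by omega), if_neg (by omega),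
        if_pos h2, schr, v0 n (by rw [memI]; omega), v0 (n - 1) (by rw [memI]; omega),
        v1 (n + 1) (by rw [memI]; omega), show n + 1 = -((s : ℤ) + 1) by omega]
      nlinarith [sq_nonneg (u (-(s + 1)))]
    have hnI : n ∈ I := by rw [memI]; omega
    have hWn : W n = W₀ n := hW n ((memI n).1 hnI).1 ((memI n).1 hnI).2
    rw [if_pos hnI, if_neg h1, if_neg h2]
    rcases eq_or_ne n ((s : ℤ) + 1) with h3 | h3
    · rw [if_pos h3, if_neg (by omega), schr, schr, v1 n hnI, v0 (n + 1) (by rw [memI]; omega),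
        v1 (n - 1) (by rw [memI]; omega), hWn, show n + 1 = (s : ℤ) + 2 by omega]
      nlinarith [sq_nonneg (u (n - 1) + u (s + 2) + (W₀ n - E) * u n + u (s + 2))]
    rcases eq_or_ne n (-((s : ℤ) + 1)) with h4 | h4
    · rw [if_neg h3, if_pos h4, schr, schr, v1 n hnI, v0 (n - 1) (by rw [memI]; omega),
        v1 (n + 1) (by rw [memI]; omega), hWn, show n - 1 = -((s : ℤ) + 2) by omega]
      nlinarith [sq_nonneg (u (-(s + 2)) + u (n + 1) + (W₀ n - E) * u n + u (-(s + 2)))]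
    rw [memI] at hnI
    rw [if_neg h3, if_neg h4, schr, schr, v1 n (by rw [memI]; omega),
      v1 (n - 1) (by rw [memI]; omega), v1 (n + 1) (by rw [memI]; omega), hWn]
    nlinarith [sq_nonneg (u (n - 1) + u (n + 1) + (W₀ n - E) * u n)]
  refine (Finset.sum_le_sum pt).trans_eq ?_
  have e2 := sum_Icc_neg_succ (fun n => u n ^ 2) (s + 1)
  have e1 := sum_Icc_neg_succ (fun n => u n ^ 2) s
  rw [Finset.sum_add_distrib, ← Finset.mul_sum, ← Finset.mul_sum, Finset.sum_add_distrib,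
    Finset.sum_add_distrib, Finset.sum_add_distrib, Finset.sum_ite_eq', Finset.sum_ite_eq',
    Finset.sum_ite_eq', Finset.sum_ite_eq', if_pos (by rw [memJ]; omega),
    if_pos (by rw [memJ]; omega), if_pos (by rw [memJ]; omega), if_pos (by rw [memJ]; omega),
    Finset.sum_ite_mem, Finset.inter_eq_right.mpr hIJ, hJ, e2, e1]
  push_cast
  rw [show (s : ℤ) + 1 + 1 = s + 2 by ring]
  ring

/-- Iterating `decay_step` over the radii `1, 3, …, 2m + 1`: where `W` agrees with a potential
having a gap at `E`, the mass of `u` at the centre of the stretch is exponentially small up to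
the contribution of `(H_W - E) u`. -/
lemma decay {W W₀ : ℤ → ℝ} {E g : ℝ} (hg : 0 < g) (h : LowerBound W₀ E g) (u : ℤ → ℝ) (m : ℕ)
    (hW : ∀ n : ℤ, -(2 * (m : ℤ)) ≤ n → n ≤ 2 * (m : ℤ) → W n = W₀ n) :
    ∑ n ∈ Finset.Icc (-((1 : ℕ) : ℤ)) ((1 : ℕ) : ℤ), u n ^ 2 ≤
      (2 / (2 + g)) ^ m *
        ∑ n ∈ Finset.Icc (-((2 * m + 1 : ℕ) : ℤ)) ((2 * m + 1 : ℕ) : ℤ), u n ^ 2 +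
      2 / g * ∑ n ∈ Finset.Icc (-((2 * m + 1 : ℕ) : ℤ)) ((2 * m + 1 : ℕ) : ℤ),
        schr W E u n ^ 2 := by
  set a : ℕ → ℝ := fun r => ∑ n ∈ Finset.Icc (-(r : ℤ)) (r : ℤ), u n ^ 2 with ha
  set G := ∑ n ∈ Finset.Icc (-((2 * m + 1 : ℕ) : ℤ)) ((2 * m + 1 : ℕ) : ℤ), schr W E u n ^ 2
    with hG
  have hG0 : 0 ≤ G := Finset.sum_nonneg fun _ _ => sq_nonneg _
  have hmono : ∀ r, a r ≤ a (r + 1) := fun r => by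
    have := sum_Icc_neg_succ (fun n => u n ^ 2) r
    simp only [ha]
    rw [this]
    nlinarith [sq_nonneg (u (r + 1)), sq_nonneg (u (-(r + 1)))]
  set κ := 2 / (2 + g) with hκ
  have hκ0 : 0 < κ := by positivity
  set D := 2 / g * G with hD
  have hgD : g * D = 2 * G := by rw [hD]; field_simp
  have claim : ∀ j ≤ m, a 1 - D ≤ κ ^ j * (a (2 * j + 1) - D) := by
    intro j
    induction j with
    | zero => intro _; simp
    | succ j ih =>
      intro hj
      have h1 := ih (by omega)
      have h2 := decay_step (W := W) h u (2 * j + 1) (fun n hn hn' => hW n (by push_cast at hn; omega)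
        (by push_cast at hn'; omega))
      have h3 : ∑ n ∈ Finset.Icc (-((2 * j + 1 + 1 : ℕ) : ℤ)) ((2 * j + 1 + 1 : ℕ) : ℤ),
          schr W E u n ^ 2 ≤ G := by
        refine Finset.sum_le_sum_of_subset_of_nonneg ?_ (fun _ _ _ => sq_nonneg _)
        intro n; simp only [Finset.mem_Icc]; push_cast; omega
      change g * a (2 * j + 1 + 1) ≤ 2 * _ + 2 * (a (2 * j + 1 + 2) - a (2 * j + 1)) at h2
      have h4 := mul_le_mul_of_nonneg_left (hmono (2 * j + 1)) hg.le
      have h5 : (2 + g) * (a (2 * j + 1) - D) ≤ 2 * (a (2 * (j + 1) + 1) - D) := by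
        rw [show 2 * (j + 1) + 1 = 2 * j + 1 + 2 by ring]
        linarith
      have h6 : a (2 * j + 1) - D ≤ κ * (a (2 * (j + 1) + 1) - D) := by
        rw [hκ, div_mul_eq_mul_div, le_div_iff₀ (by positivity), mul_comm]
        exact h5
      refine h1.trans ?_
      rw [pow_succ, mul_assoc]
      exact mul_le_mul_of_nonneg_left h6 (by positivity)
  have h1 := claim m le_rfl
  have h2 : 0 ≤ κ ^ m * D := by positivity
  change a 1 ≤ κ ^ m * a (2 * m + 1) + D
  linarith

/-! ### Summation over periods -/

lemma block_sums {f : ℤ → ℝ} (hf : Summable f) {q : ℕ} (hq : 0 < q) :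
    Summable (fun t : ℤ => ∑ r ∈ Finset.range q, f (t * q + r)) ∧
      ∑' t : ℤ, ∑ r ∈ Finset.range q, f (t * q + r) = ∑' n, f n := by
  have : NeZero q := ⟨hq.ne'⟩
  have h1 : HasSum (fun x : ℤ × Fin q => f ((Int.divModEquiv q).symm x)) (∑' n, f n) :=
    (Int.divModEquiv q).symm.hasSum_iff.mpr hf.hasSum
  have h2 := h1.prod_fiberwise (fun t => hasSum_fintype _)
  have h3 : (fun t : ℤ => ∑ r : Fin q, f ((Int.divModEquiv q).symm (t, r))) =
      fun t : ℤ => ∑ r ∈ Finset.range q, f (t * q + r) := by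
    funext t
    exact Fin.sum_univ_eq_sum_range (fun r : ℕ => f (t * q + r)) q
  rw [h3] at h2
  exact ⟨h2.summable, h2.tsum_eq⟩

/-- The windows of radius `R` about the multiples of `q` are disjoint when `2R + 1 ≤ q`. -/
lemma window_sums {f : ℤ → ℝ} (hf : Summable f) (h0 : ∀ n, 0 ≤ f n) {q R : ℕ}
    (hR : 2 * R + 1 ≤ q) :
    Summable (fun t : ℤ => ∑ n ∈ Finset.Icc (-(R : ℤ)) (R : ℤ), f (t * q + n)) ∧
      ∑' t : ℤ, ∑ n ∈ Finset.Icc (-(R : ℤ)) (R : ℤ), f (t * q + n) ≤ ∑' n, f n := by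
  obtain ⟨h1, h2⟩ := block_sums (summable_shift hf (-(R : ℤ))) (q := q) (by omega)
  have hle : ∀ t : ℤ, ∑ n ∈ Finset.Icc (-(R : ℤ)) (R : ℤ), f (t * q + n) ≤
      ∑ r ∈ Finset.range q, f (t * q + r + -(R : ℤ)) := fun t => by
    have e : ∑ r ∈ Finset.range q, f (t * q + r + -(R : ℤ)) =
        ∑ n ∈ (Finset.range q).image (fun r : ℕ => (r : ℤ) + -(R : ℤ)), f (t * q + n) := by
      rw [Finset.sum_image (fun a _ b _ hab => by simpa using hab)]
      simp only [add_assoc]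
    rw [e]
    refine Finset.sum_le_sum_of_subset_of_nonneg (fun n hn => ?_) (fun _ _ _ => h0 _)
    rw [Finset.mem_Icc] at hn
    rw [Finset.mem_image]
    exact ⟨(n + R).toNat, by rw [Finset.mem_range]; omega, by omega⟩
  have hs := Summable.of_nonneg_of_le (fun t => Finset.sum_nonneg fun n _ => h0 _) hle h1
  refine ⟨hs, (hs.tsum_le_tsum hle h1).trans_eq ?_⟩
  rw [h2, tsum_shift]

/-! ### The operator cut at the period boundaries -/

lemma symmetric_lower_bound {F : Type*} [NormedAddCommGroup F] [InnerProductSpace ℝ F]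
    [FiniteDimensional ℝ F] {q : ℕ} (hn : Module.finrank ℝ F = q) {T : F →ₗ[ℝ] F}
    (hT : T.IsSymmetric) {E δ : ℝ} (hδ : 0 ≤ δ) (hev : ∀ j, δ ≤ |hT.eigenvalues hn j - E|)
    (v : F) : δ ^ 2 * ‖v‖ ^ 2 ≤ ‖T v - E • v‖ ^ 2 := by
  set b := hT.eigenvectorBasis hn
  rw [← b.sum_sq_inner_right v, ← b.sum_sq_inner_right (T v - E • v), Finset.mul_sum]
  refine Finset.sum_le_sum fun j _ => ?_
  have : inner ℝ (b j) (T v - E • v) = (hT.eigenvalues hn j - E) * inner ℝ (b j) v := by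
    rw [inner_sub_right, ← hT (b j) v, hT.apply_eigenvectorBasis, inner_smul_left,
      inner_smul_right]
    simp [b]; ring
  rw [this, mul_pow]
  refine mul_le_mul_of_nonneg_right ?_ (sq_nonneg _)
  rw [← sq_abs (hT.eigenvalues hn j - E)]
  exact pow_le_pow_left₀ hδ (hev j) 2

/-- The Jacobi matrix of `H_W` restricted to `{0, …, q-1}` with the bonds at both ends removed. -/
def jacobi (W : ℤ → ℝ) (q : ℕ) : Matrix (Fin q) (Fin q) ℝ := fun i j =>
  (if (j : ℕ) + 1 = i then 1 else 0) + (if (j : ℕ) = i + 1 then 1 else 0) +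
    (if (j : ℕ) = i then W (i : ℕ) else 0)

/-- Outside the `δ`-neighbourhood of its `q` eigenvalues the cut operator is bounded below
by `δ`. -/
lemma exists_block_eigenvalues (W : ℤ → ℝ) (q : ℕ) : ∃ ev : Fin q → ℝ, ∀ E δ : ℝ, 0 ≤ δ →
    (∀ j, δ ≤ |ev j - E|) → ∀ u : ℤ → ℝ,
      δ ^ 2 * ∑ r ∈ Finset.range q, u r ^ 2 ≤ ∑ r ∈ Finset.range q,
        ((if r = 0 then 0 else u ((r : ℤ) - 1)) + (if r + 1 = q then 0 else u ((r : ℤ) + 1)) +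
          (W r - E) * u r) ^ 2 := by
  have hM : (jacobi W q).IsHermitian := by
    ext i j
    simp only [Matrix.conjTranspose_apply, jacobi, star_trivial]
    rcases eq_or_ne i j with h | h
    · rw [h]
    · have h' : (i : ℕ) ≠ j := fun e => h (Fin.ext e)
      rw [if_neg h', if_neg h'.symm]
      split_ifs <;> first | omega | norm_num
  have hT := Matrix.isSymmetric_toEuclideanLin_iff.mpr hM
  have hn : Module.finrank ℝ (EuclideanSpace ℝ (Fin q)) = q := by simp
  refine ⟨hT.eigenvalues hn, fun E δ hδ hev u => ?_⟩
  have key := symmetric_lower_bound hn hT hδ hev (WithLp.toLp 2 (fun i : Fin q => u (i : ℕ)))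
  rw [EuclideanSpace.real_norm_sq_eq, EuclideanSpace.real_norm_sq_eq] at key
  have e1 : ∀ i : Fin q, ((Matrix.toEuclideanLin (jacobi W q))
      (WithLp.toLp 2 (fun i : Fin q => u (i : ℕ))) -
        E • WithLp.toLp 2 (fun i : Fin q => u (i : ℕ))) i =
      (if (i : ℕ) = 0 then 0 else u (((i : ℕ) : ℤ) - 1)) +
        (if (i : ℕ) + 1 = q then 0 else u (((i : ℕ) : ℤ) + 1)) +
          (W (i : ℕ) - E) * u (i : ℕ) := by
    intro i
    obtain ⟨i, hi⟩ := i
    simp only [Matrix.toEuclideanLin, Matrix.toLpLin_toLp, PiLp.sub_apply, PiLp.smul_apply, smul_eq_mul,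
      Matrix.toLin'_apply, Matrix.mulVec, dotProduct, jacobi, add_mul, ite_mul, one_mul, zero_mul]
    rw [Finset.sum_add_distrib, Finset.sum_add_distrib,
      Fin.sum_univ_eq_sum_range (fun j : ℕ => if j + 1 = i then u j else 0) q,
      Fin.sum_univ_eq_sum_range (fun j : ℕ => if j = i + 1 then u j else 0) q,
      Fin.sum_univ_eq_sum_range (fun j : ℕ => if j = i then W i * u j else 0) q,
      Finset.sum_ite_eq', Finset.sum_ite_eq', if_pos (Finset.mem_range.mpr hi)]
    have h1 : ∑ j ∈ Finset.range q, (if j + 1 = i then u j else 0) =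
        if i = 0 then 0 else u ((i : ℤ) - 1) := by
      rcases i with _ | i
      · simp
      · simp only [add_left_inj, Finset.sum_ite_eq', Finset.mem_range]
        rw [if_pos (by omega), if_neg (by omega)]
        push_cast; simp
    have h2 : (if i + 1 ∈ Finset.range q then u ((i + 1 : ℕ) : ℤ) else 0) =
        if i + 1 = q then 0 else u ((i : ℤ) + 1) := by
      by_cases h : i + 1 = q
      · rw [if_neg (by rw [Finset.mem_range]; omega), if_pos h]
      · rw [if_pos (by rw [Finset.mem_range]; omega), if_neg h]; push_cast; rfl
    rw [h1, h2]
    ring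
  simp only [e1] at key
  rw [Fin.sum_univ_eq_sum_range (fun r : ℕ => ((if r = 0 then 0 else u ((r : ℤ) - 1)) +
    (if r + 1 = q then 0 else u ((r : ℤ) + 1)) + (W r - E) * u r) ^ 2) q] at key
  exact (Fin.sum_univ_eq_sum_range (fun r : ℕ => u r ^ 2) q) ▸ key

/-- If `W` is `q`-periodic and agrees near the cut with a potential having a gap at `E`, and `E`
is `δ`-far from the spectrum of the operator cut at the period boundaries, then `E` is in a gap
of `H_W`: reinserting a bond costs only the exponentially small mass that `ℓ²` sequences can
have at the cut. -/
lemma lowerBound_of_block {W W₀ : ℤ → ℝ} {E g A δ : ℝ} {q m : ℕ} (hWb : ∀ n, |W n - E| ≤ A)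
    (hg : 0 < g) (hper : ∀ n : ℤ, W (n + q) = W n) (h₀ : LowerBound W₀ E g)
    (hW : ∀ n : ℤ, -(2 * (m : ℤ)) ≤ n → n ≤ 2 * (m : ℤ) → W n = W₀ n) (hq : 4 * m + 3 ≤ q)
    (hδ : 12 * (2 / (2 + g)) ^ m ≤ δ ^ 2)
    (hblk : ∀ u : ℤ → ℝ, δ ^ 2 * ∑ r ∈ Finset.range q, u r ^ 2 ≤ ∑ r ∈ Finset.range q,
        ((if r = 0 then 0 else u ((r : ℤ) - 1)) + (if r + 1 = q then 0 else u ((r : ℤ) + 1)) +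
          (W r - E) * u r) ^ 2) :
    ∃ g' : ℝ, 0 < g' ∧ LowerBound W E g' := by
  have hκ : 0 < (2 / (2 + g)) ^ m := by positivity
  set κ := (2 / (2 + g)) ^ m with hκdef
  have hδ0 : 0 < δ ^ 2 := by linarith
  refine ⟨δ ^ 2 / 2 / (3 + 12 / g), by positivity, fun u hu => ?_⟩
  set f : ℤ → ℝ := fun n => u n ^ 2 with hf
  set h : ℤ → ℝ := fun n => schr W E u n ^ 2 with hh
  have hhs : Summable h := summable_schr hWb hu
  have hWt : ∀ t n : ℤ, W (t * q + n) = W n := fun t n => by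
    have : Function.Periodic W (q : ℤ) := hper
    rw [add_comm]
    exact this.int_mul t n
  have hst : ∀ t n : ℤ, schr W E (fun n => u (t * q + n)) n = schr W E u (t * q + n) :=
    fun t n => by simp only [schr, hWt, add_assoc, add_sub_assoc]
  -- the mass of `u` at the cuts
  set w : ℤ → ℝ := fun t => ∑ n ∈ Finset.Icc (-((1 : ℕ) : ℤ)) ((1 : ℕ) : ℤ), f (t * q + n)
    with hw
  have hfs : Summable f := hu
  have f0 : ∀ n, 0 ≤ f n := fun n => sq_nonneg _
  have h0 : ∀ n, 0 ≤ h n := fun n => sq_nonneg _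
  obtain ⟨ws, -⟩ := window_sums hfs f0 (q := q) (R := 1) (by omega)
  obtain ⟨as, ale⟩ := window_sums hfs f0 (q := q) (R := 2 * m + 1) (by omega)
  obtain ⟨gs, gle⟩ := window_sums hhs h0 (q := q) (R := 2 * m + 1) (by omega)
  have wle : ∑' t, w t ≤ κ * ∑' n, f n + 2 / g * ∑' n, h n := by
    calc ∑' t, w t ≤ ∑' t : ℤ, (κ * (∑ n ∈ Finset.Icc (-((2 * m + 1 : ℕ) : ℤ))
            ((2 * m + 1 : ℕ) : ℤ), f (t * q + n)) + 2 / g * (∑ n ∈ Finset.Icc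
            (-((2 * m + 1 : ℕ) : ℤ)) ((2 * m + 1 : ℕ) : ℤ), h (t * q + n))) := by
          refine ws.tsum_le_tsum (fun t => ?_) ((as.mul_left _).add (gs.mul_left _))
          have := decay hg h₀ (fun n => u (t * q + n)) m hW
          simp only [hst] at this
          exact this
      _ ≤ _ := by
          rw [(as.mul_left _).tsum_add (gs.mul_left _), tsum_mul_left, tsum_mul_left]
          have h2g : 0 ≤ 2 / g := by positivity
          exact add_le_add (mul_le_mul_of_nonneg_left ale hκ.le)
            (mul_le_mul_of_nonneg_left gle h2g)
  -- one period of the cut operator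
  have hblock : ∀ t : ℤ, δ ^ 2 * ∑ r ∈ Finset.range q, f (t * q + r) ≤
      3 * ∑ r ∈ Finset.range q, h (t * q + r) + 3 * w t + 3 * w (t + 1) := by
    intro t
    refine (hblk (fun n => u (t * q + n))).trans ?_
    have pt : ∀ r ∈ Finset.range q, ((if r = 0 then 0 else u (t * q + ((r : ℤ) - 1))) +
        (if r + 1 = q then 0 else u (t * q + ((r : ℤ) + 1))) + (W r - E) * u (t * q + r)) ^ 2 ≤
        3 * h (t * q + r) + (if r = 0 then 3 * f (t * q + -1) else 0) +
          (if r = q - 1 then 3 * f ((t + 1) * q + 0) else 0) := by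
      intro r hr
      have hrq := Finset.mem_range.mp hr
      have e : h (t * q + r) = (u (t * q + ((r : ℤ) - 1)) + u (t * q + ((r : ℤ) + 1)) +
          (W r - E) * u (t * q + r)) ^ 2 := by
        simp only [hh, schr, hWt, add_assoc, add_sub_assoc]
      rw [e]
      set z := u (t * q + r)
      have ea : r = 0 → f (t * q + -1) = u (t * q + ((r : ℤ) - 1)) ^ 2 := fun hr0 => by
        rw [hr0]; norm_num [hf]
      have eb : r = q - 1 → f ((t + 1) * q + 0) = u (t * q + ((r : ℤ) + 1)) ^ 2 := fun hr0 => by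
        rw [show (t + 1) * (q : ℤ) + 0 = t * q + ((r : ℤ) + 1) by
          rw [show (r : ℤ) = q - 1 by omega]; ring]
      have hrq1 : r + 1 = q ↔ r = q - 1 := by omega
      simp only [hrq1]
      set a := u (t * q + ((r : ℤ) - 1))
      set b := u (t * q + ((r : ℤ) + 1))
      set c := (W r - E) * z
      by_cases h1 : r = 0
      · have h2 : r ≠ q - 1 := by omega
        rw [if_pos h1, if_neg h2, if_pos h1, if_neg h2, ea h1]
        nlinarith [sq_nonneg (a + b + c + a), sq_nonneg (a + b + c), sq_nonneg a]
      by_cases h2 : r = q - 1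
      · rw [if_neg h1, if_pos h2, if_neg h1, if_pos h2, eb h2]
        nlinarith [sq_nonneg (a + b + c + b), sq_nonneg (a + b + c), sq_nonneg b]
      · rw [if_neg h1, if_neg h2, if_neg h1, if_neg h2]
        nlinarith [sq_nonneg (a + b + c)]
    refine (Finset.sum_le_sum pt).trans ?_
    rw [Finset.sum_add_distrib, Finset.sum_add_distrib, ← Finset.mul_sum, Finset.sum_ite_eq',
      Finset.sum_ite_eq', if_pos (Finset.mem_range.mpr (by omega)),
      if_pos (Finset.mem_range.mpr (by omega))]
    have b1 : f (t * q + -1) ≤ w t :=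
      Finset.single_le_sum (f := fun n => f (t * q + n)) (fun n _ => f0 _) (by simp)
    have b2 : f ((t + 1) * q + 0) ≤ w (t + 1) :=
      Finset.single_le_sum (f := fun n => f ((t + 1) * q + n)) (fun n _ => f0 _) (by simp)
    linarith
  obtain ⟨fb, fbe⟩ := block_sums hfs (q := q) (by omega)
  obtain ⟨hb, hbe⟩ := block_sums hhs (q := q) (by omega)
  have ws' := summable_shift ws 1
  have total : δ ^ 2 * ∑' n, f n ≤ 3 * ∑' n, h n + 3 * ∑' t, w t + 3 * ∑' t, w t := by
    have := (fb.mul_left (δ ^ 2)).tsum_le_tsum hblock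
      (((hb.mul_left 3).add (ws.mul_left 3)).add (ws'.mul_left 3))
    rwa [((hb.mul_left 3).add (ws.mul_left 3)).tsum_add (ws'.mul_left 3),
      (hb.mul_left 3).tsum_add (ws.mul_left 3), tsum_mul_left, tsum_mul_left, tsum_mul_left,
      tsum_mul_left, tsum_shift w 1, fbe, hbe] at this
  have hU : 0 ≤ ∑' n, f n := tsum_nonneg f0
  have h3 := mul_le_mul_of_nonneg_right hδ hU
  rw [div_mul_eq_mul_div, div_le_iff₀ (by positivity)]
  have e : (∑' n, h n) * (3 + 12 / g) = 3 * ∑' n, h n + 6 * (2 / g * ∑' n, h n) := by ring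
  change _ ≤ (∑' n, h n) * (3 + 12 / g)
  rw [e]
  linarith

/-! ### Thin spectrum of a periodic potential with many gapped stretches -/

/-- Suppose every `E ∈ K` lies in a gap of one of `M` potentials, each of which appears in the
`q`-periodic `W` on a stretch of length `4m + 1` about `c i`. Then `K ∩ σ(H_W)` lies within
distance `δ` of the at most `M q` eigenvalues of the operators cut in the middle of the stretches. -/
lemma volume_spectrum_le {W : ℤ → ℝ} {B g δ : ℝ} {q m M : ℕ} {K : Set ℝ}
    (hWb : ∀ n, |W n| ≤ B) (hg : 0 < g) (hδ0 : 0 ≤ δ) (hper : ∀ n : ℤ, W (n + q) = W n)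
    (hq : 4 * m + 3 ≤ q) (hδ : 12 * (2 / (2 + g)) ^ m ≤ δ ^ 2) (V : ℕ → ℤ → ℝ) (c : ℕ → ℤ)
    (hV : ∀ i < M, ∀ n : ℤ, c i - 2 * m ≤ n → n ≤ c i + 2 * m → W n = V i n)
    (hK : ∀ E ∈ K, ∃ i < M, LowerBound (V i) E g) :
    volume (K ∩ SchrodingerSpectrum W) ≤ ENNReal.ofReal (M * (q * (2 * δ))) := by
  choose ev hev using fun i : ℕ => exists_block_eigenvalues (fun n => W (n + c i)) q
  have hsub : K ∩ SchrodingerSpectrum W ⊆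
      ⋃ i ∈ Finset.range M, ⋃ j ∈ (Finset.univ : Finset (Fin q)), Metric.closedBall (ev i j) δ := by
    rintro E ⟨hEK, hES⟩
    obtain ⟨i, hi, hL⟩ := hK E hEK
    by_contra hcon
    simp only [mem_iUnion, not_exists, Finset.mem_range, Finset.mem_univ, Metric.mem_closedBall]
      at hcon
    have hfar : ∀ j, δ ≤ |ev i j - E| := fun j => by
      have := hcon i hi j trivial
      rw [Real.dist_eq, abs_sub_comm] at this
      exact (not_le.mp this).le
    have hWb' : ∀ n, |W n - E| ≤ B + |E| := fun n =>
      (abs_sub _ _).trans (add_le_add (hWb n) le_rfl)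
    obtain ⟨g', hg', hL'⟩ := lowerBound_of_block (W := fun n => W (n + c i))
      (W₀ := fun n => V i (n + c i)) (fun n => hWb' (n + c i)) hg
      (fun n => by rw [add_right_comm]; exact hper _) (hL.shift (c i))
      (fun n h1 h2 => hV i hi _ (by omega) (by omega)) hq hδ (hev i E δ hδ0 hfar)
    have hL'' := hL'.shift (-(c i))
    simp only [neg_add_cancel_right] at hL''
    exact notMem_spectrum_of_lowerBound hWb' hg' hL'' hES
  calc volume (K ∩ SchrodingerSpectrum W)
      ≤ volume (⋃ i ∈ Finset.range M, ⋃ j ∈ (Finset.univ : Finset (Fin q)),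
          Metric.closedBall (ev i j) δ) := measure_mono hsub
    _ ≤ ∑ i ∈ Finset.range M, ∑ j : Fin q, volume (Metric.closedBall (ev i j) δ) :=
        (measure_biUnion_finset_le _ _).trans
          (Finset.sum_le_sum fun i _ => measure_biUnion_finset_le _ _)
    _ = ENNReal.ofReal (M * (q * (2 * δ))) := by
        simp only [Real.volume_closedBall, Finset.sum_const, Finset.card_univ, Fintype.card_fin,
          Finset.card_range, nsmul_eq_mul]
        rw [ENNReal.ofReal_mul (Nat.cast_nonneg M), ENNReal.ofReal_mul (Nat.cast_nonneg q),
          ENNReal.ofReal_natCast, ENNReal.ofReal_natCast]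

/-! ### Aggregation and periodic extension -/

lemma agg_congr {k : ℕ} {x y : ℤ → Fin k → ℝ} {n : ℤ} (h : x (n.fdiv k) = y (n.fdiv k)) :
    agg k x n = agg k y n := by
  unfold agg
  split_ifs
  · rw [h]
  · rfl

lemma agg_smul {k : ℕ} (y : ℤ → Fin k → ℝ) (lam : ℝ) (n : ℤ) :
    agg k (fun j => lam • y j) n = lam * agg k y n := by
  unfold agg
  split_ifs
  · rfl
  · simp

lemma abs_agg_le {k : ℕ} {y : ℤ → Fin k → ℝ} {B : ℝ} (hB : 0 ≤ B) (h : ∀ j, ‖y j‖ ≤ B) (n : ℤ) :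
    |agg k y n| ≤ B := by
  unfold agg
  split_ifs
  · exact (norm_le_pi_norm (y _) _).trans (h _)
  · simpa using hB

lemma agg_periodic {k : ℕ} (hk : 0 < k) {y : ℤ → Fin k → ℝ} {P : ℕ}
    (h : ∀ j : ℤ, y (j + (P : ℤ)) = y j) (n : ℤ) :
    agg k y (n + ((P * k : ℕ) : ℤ)) = agg k y n := by
  have hk' : (k : ℤ) ≠ 0 := by exact_mod_cast hk.ne'
  unfold agg
  rw [dif_pos hk, dif_pos hk]
  have e1 : (n + ((P * k : ℕ) : ℤ)).fdiv k = n.fdiv k + P := by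
    rw [Int.fdiv_eq_ediv_of_nonneg _ (by positivity), Int.fdiv_eq_ediv_of_nonneg _ (by positivity)]
    push_cast
    exact Int.add_mul_ediv_right _ _ hk'
  have e2 : (n + ((P * k : ℕ) : ℤ)) % (k : ℤ) = n % k := by
    push_cast
    exact Int.add_mul_emod_self_right _ _ _
  simp only [e1, e2, h]

lemma perExt_mem {α : Type*} [Zero α] {m : ℕ} (hm : 0 < m) (w : Fin m → α) (n : ℤ) :
    ∃ i, perExt w n = w i := by
  unfold perExt
  rw [dif_pos hm]
  exact ⟨_, rfl⟩

lemma perExt_of_periodic {α : Type*} [Zero α] {p : ℕ} (hp : 0 < p) {x : ℤ → α}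
    (hper : ∀ j : ℤ, x (j + (p : ℤ)) = x j) (n : ℤ) :
    perExt (fun i : Fin p => x (i : ℕ)) n = x n := by
  have hp' : (p : ℤ) ≠ 0 := by exact_mod_cast hp.ne'
  have hx : Function.Periodic x (p : ℤ) := hper
  unfold perExt
  rw [dif_pos hp]
  simp only
  rw [Int.toNat_of_nonneg (Int.emod_nonneg n hp'), Int.emod_def, mul_comm]
  exact hx.sub_int_mul_eq _

/-! ### Gap-opening near a given energy and coupling -/

/-- The word `λx` has a nearby word over `λY` whose operator has a gap at `E`; rescaled by `λ⁻¹`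
it gives a potential over `Y` near `x`, and the gap persists, with a uniform lower bound, for
energies near `E` and couplings near `λ`. -/
lemma local_gap {k : ℕ} {S : Set ℝ} {Y : Set (Fin k → ℝ)} {lam : ℝ} (hlam : lam ≠ 0)
    (hGR : GapRich k ((fun w => lam • w) '' Y) S)
    {x : ℤ → (Fin k → ℝ)} (hxY : ∀ j, x j ∈ Y)
    {p : ℕ} (hp : 0 < p) (hper : ∀ j : ℤ, x (j + (p : ℤ)) = x j)
    {ε : ℝ} (hε : 0 < ε) {E : ℝ} (hE : E ∉ S) :
    ∃ (y : ℤ → (Fin k → ℝ)) (g : ℝ), (∀ j, y j ∈ Y) ∧ (∀ j : ℤ, dist (x j) (y j) < ε) ∧ 0 < g ∧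
      ∀ᶠ z : ℝ × ℝ in nhds (E, lam), LowerBound (fun n => z.2 * agg k y n) z.1 g := by
  have hl0 : 0 < |lam| := abs_pos.mpr hlam
  obtain ⟨l, hl, y', hy', hd, hsp⟩ := hGR.2 E hE p hp (fun i : Fin p => lam • x (i : ℕ))
    (fun i => ⟨_, hxY _, rfl⟩) (|lam| * ε) (by positivity)
  have hlx : ∀ j, perExt (fun i : Fin p => lam • x (i : ℕ)) j = lam • x j :=
    perExt_of_periodic hp (x := fun j => lam • x j) (fun j => by rw [hper])
  set y : ℤ → Fin k → ℝ := fun j => lam⁻¹ • perExt y' j with hy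
  have hly : ∀ j, lam • y j = perExt y' j := fun j => smul_inv_smul₀ hlam _
  have hagg : agg k (perExt y') = fun n => lam * agg k y n := by
    funext n
    rw [← agg_smul]
    exact agg_congr (hly _).symm
  obtain ⟨B, hB0, hB⟩ : ∃ B : ℝ, 0 ≤ B ∧ ∀ j, ‖y j‖ ≤ B := by
    refine ⟨∑ i, ‖lam⁻¹ • y' i‖, Finset.sum_nonneg fun _ _ => norm_nonneg _, fun j => ?_⟩
    obtain ⟨i, hi⟩ := perExt_mem hl y' j
    rw [hy]
    simp only [hi]
    exact Finset.single_le_sum (f := fun i => ‖lam⁻¹ • y' i‖) (fun _ _ => norm_nonneg _)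
      (Finset.mem_univ i)
  have hab := abs_agg_le hB0 hB
  rw [hagg] at hsp
  have hW : ∀ n, |lam * agg k y n - E| ≤ |lam| * B + |E| := fun n => by
    refine (abs_sub _ _).trans (add_le_add ?_ le_rfl)
    rw [abs_mul]
    exact mul_le_mul_of_nonneg_left (hab n) hl0.le
  obtain ⟨g, hg, hL⟩ := exists_lowerBound hW hsp
  have hsg : 0 < √g := Real.sqrt_pos.mpr hg
  refine ⟨y, g / 4, fun j => ?_, fun j => ?_, by positivity, ?_⟩
  · obtain ⟨i, hi⟩ := perExt_mem hl y' j
    obtain ⟨w, hwY, hw⟩ := hy' i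
    rw [hy]
    simp only [hi, ← hw, inv_smul_smul₀ hlam]
    exact hwY
  · have := hd j
    rw [hlx, ← hly, dist_smul₀, Real.norm_eq_abs] at this
    exact lt_of_mul_lt_mul_left this hl0.le
  · have hcont : Continuous (fun z : ℝ × ℝ => |lam - z.2| * B + |E - z.1|) := by fun_prop
    have hev : ∀ᶠ z : ℝ × ℝ in nhds (E, lam), |lam - z.2| * B + |E - z.1| < √g / 2 :=
      hcont.continuousAt.eventually (eventually_lt_nhds (by simp [hg]))
    filter_upwards [hev] with z hz
    refine hL.perturb hW (s := √g / 2) ?_ (fun n => ?_)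
    · rw [div_pow, Real.sq_sqrt hg.le]; linarith
    · have e : lam * agg k y n - E - (z.2 * agg k y n - z.1) =
          (lam - z.2) * agg k y n - (E - z.1) := by ring
      rw [e]
      refine (abs_sub _ _).trans (le_trans ?_ hz.le)
      rw [abs_mul]
      exact add_le_add (mul_le_mul_of_nonneg_left (hab n) (abs_nonneg _)) le_rfl

lemma exists_pos_le_finset {α : Type*} (t : Finset α) (g : α → ℝ) (hg : ∀ a ∈ t, 0 < g a) :
    ∃ g₀ : ℝ, 0 < g₀ ∧ ∀ a ∈ t, g₀ ≤ g a := by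
  rcases t.eq_empty_or_nonempty with rfl | ht
  · exact ⟨1, one_pos, by simp⟩
  · exact ⟨t.inf' ht g, (Finset.lt_inf'_iff ht).mpr hg, fun a ha => Finset.inf'_le g ha⟩

/-- Exponential decay beats the linear number of eigenvalues. -/
lemma exists_rate (C θ : ℝ) (hC : 0 ≤ C) (hθ0 : 0 < θ) (hθ1 : θ < 1) (L : ℕ) (hL : 0 < L) :
    ∃ N₀ : ℕ, ∃ c₀ : ℝ, 0 < c₀ ∧ ∀ N : ℕ, N₀ ≤ N →
      C * N * θ ^ (N / L) ≤ Real.exp (-(c₀ * N)) := by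
  have hlog : 0 < -Real.log θ := by linarith [Real.log_neg hθ0 hθ1]
  have hL' : (0 : ℝ) < L := by exact_mod_cast hL
  set c := -Real.log θ / (2 * L) with hc
  have hc0 : 0 < c := by positivity
  set D := C * θ⁻¹ with hD
  have hD0 : 0 ≤ D := by positivity
  obtain ⟨N₀, hN₀⟩ := exists_nat_ge (2 * D / c ^ 2)
  refine ⟨N₀, c, hc0, fun N hN => ?_⟩
  have hNr : 2 * D / c ^ 2 ≤ N := hN₀.trans (by exact_mod_cast hN)
  have h1 : D * N ≤ Real.exp (c * N) := by
    have h2 := Real.quadratic_le_exp_of_nonneg (x := c * N) (by positivity)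
    have h3 : 2 * D ≤ N * c ^ 2 := (div_le_iff₀ (by positivity)).mp hNr
    have h4 := mul_le_mul_of_nonneg_right h3 (Nat.cast_nonneg (α := ℝ) N)
    have h5 : 0 ≤ c * N := by positivity
    nlinarith
  have h6 : θ ^ (N / L) ≤ θ⁻¹ * Real.exp (-(2 * c * N)) := by
    have h7 : (N : ℝ) / L ≤ ((N / L : ℕ) : ℝ) + 1 := by
      rw [div_le_iff₀ hL']
      have : N < (N / L + 1) * L := by
        have h1 := Nat.div_add_mod N L
        have h2 := Nat.mod_lt N hL
        rw [add_mul, one_mul, mul_comm]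
        omega
      exact_mod_cast this.le
    have h8 : θ ^ (N / L) = Real.exp (((N / L : ℕ) : ℝ) * Real.log θ) := by
      rw [mul_comm, Real.exp_mul, Real.exp_log hθ0, Real.rpow_natCast]
    have h9 : θ⁻¹ = Real.exp (-Real.log θ) := by rw [Real.exp_neg, Real.exp_log hθ0]
    rw [h8, h9, ← Real.exp_add]
    refine Real.exp_le_exp.mpr ?_
    have h10 : 2 * c * N = -Real.log θ * (N / L) := by rw [hc]; field_simp
    rw [h10]
    nlinarith
  calc C * N * θ ^ (N / L) ≤ C * N * (θ⁻¹ * Real.exp (-(2 * c * N))) :=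
        mul_le_mul_of_nonneg_left h6 (by positivity)
    _ = D * N * Real.exp (-(2 * c * N)) := by rw [hD]; ring
    _ ≤ Real.exp (c * N) * Real.exp (-(2 * c * N)) :=
        mul_le_mul_of_nonneg_right h1 (Real.exp_pos _).le
    _ = Real.exp (-(c * N)) := by rw [← Real.exp_add]; ring_nf

/-! ### Concatenating the stretches -/

/-- The site intervals about `c = 8mpki + 4m` of radius `2m` lie in the `i`-th stretch. -/
lemma stretch_index {k p m M N i : ℕ} (hk : 0 < k) (hp : 0 < p) (hm : 0 < m) (hi : i < M)
    (hN : 8 * M * m ≤ N) {n : ℤ} (h1 : ((8 * m * p * k * i + 4 * m : ℕ) : ℤ) - 2 * m ≤ n)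
    (h2 : n ≤ ((8 * m * p * k * i + 4 * m : ℕ) : ℤ) + 2 * m) :
    n.fdiv k % ((N * p : ℕ) : ℤ) = n.fdiv k ∧
      (n.fdiv k / ((8 * m * p : ℕ) : ℤ)).toNat = i := by
  rw [Int.fdiv_eq_ediv_of_nonneg _ (by positivity)]
  set j := n / (k : ℤ) with hj
  have hk' : (0 : ℤ) < k := by exact_mod_cast hk
  have hpk : 1 ≤ p * k := Nat.mul_pos hp hk
  have hmpk : m ≤ m * (p * k) := Nat.le_mul_of_pos_right m hpk
  have l1 : ((8 * m * p * i : ℕ) : ℤ) ≤ j := by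
    rw [hj, Int.le_ediv_iff_mul_le hk']
    refine le_trans (le_of_eq ?_) (le_trans (?_ : ((8 * m * p * k * i : ℕ) : ℤ) ≤ _) h1)
    · push_cast; ring
    · push_cast; omega
  have l2 : j < ((8 * m * p * (i + 1) : ℕ) : ℤ) := by
    rw [hj, Int.ediv_lt_iff_lt_mul hk']
    refine lt_of_le_of_lt h2 ?_
    have e : 8 * m * p * (i + 1) * k = 8 * m * p * k * i + 8 * (m * (p * k)) := by ring
    have : ((8 * m * p * k * i + 4 * m : ℕ) : ℤ) + 2 * m < ((8 * m * p * (i + 1) * k : ℕ) : ℤ) := by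
      rw [e]; push_cast
      have : (m : ℤ) ≤ m * (p * k) := by exact_mod_cast hmpk
      omega
    push_cast at this ⊢
    exact this
  have l3 : 8 * m * p * (i + 1) ≤ N * p := by
    calc 8 * m * p * (i + 1) ≤ 8 * m * p * M := Nat.mul_le_mul_left _ hi
      _ = 8 * M * m * p := by ring
      _ ≤ N * p := Nat.mul_le_mul_right _ hN
  have l0 : 0 ≤ j := le_trans (by positivity) l1
  refine ⟨Int.emod_eq_of_lt l0 (lt_of_lt_of_le l2 (by exact_mod_cast l3)), ?_⟩
  have hb : (0 : ℤ) < ((8 * m * p : ℕ) : ℤ) := by exact_mod_cast (by positivity : 0 < 8 * m * p)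
  have e : j / ((8 * m * p : ℕ) : ℤ) = i := by
    refine le_antisymm (Int.lt_add_one_iff.mp ?_) ?_
    · rw [Int.ediv_lt_iff_lt_mul hb]; push_cast at l2 ⊢; linarith
    · rw [Int.le_ediv_iff_mul_le hb]; push_cast at l1 ⊢; linarith
  rw [e]; exact Int.toNat_natCast i

/-- Thin spectra for periodic approximants, uniformly in a compact set `Z` of
coupling constants: if `λY` is gap-rich with exceptional set `S` for all
`λ ∈ Z`, then any periodic `x` of minimal period `p` can be `ε`-approximated by
`Np`-periodic `y` with `Leb(K ∩ σ(H_{λy})) ≤ e^{-c₀N}` for all `λ ∈ Z` and all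
large `N`, for compact `K ⊆ ℝ∖S`. -/
theorem thin_spectrum_periodic_coupling (k : ℕ) (hk : 0 < k)
    (S : Set ℝ) (hS : IsDiscreteSet S)
    (Y : Set (Fin k → ℝ)) (hY : Perfect Y)
    (Z : Set ℝ) (hZ0 : ∀ lam ∈ Z, lam ≠ 0) (hZc : IsCompact Z)
    (hGR : ∀ lam ∈ Z, GapRich k ((fun w => lam • w) '' Y) S)
    (x : ℤ → (Fin k → ℝ)) (hxY : ∀ j, x j ∈ Y)
    (p : ℕ) (hp : 0 < p) (hper : ∀ j : ℤ, x (j + (p : ℤ)) = x j)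
    (hmin : ∀ q : ℕ, 0 < q → (∀ j : ℤ, x (j + (q : ℤ)) = x j) → p ≤ q)
    (ε : ℝ) (hε : 0 < ε) (K : Set ℝ) (hKc : IsCompact K) (hKS : K ⊆ Sᶜ) :
    ∃ N₀ : ℕ, ∃ c₀ : ℝ, 0 < c₀ ∧
      ∀ N : ℕ, N₀ ≤ N →
        ∃ y : ℤ → (Fin k → ℝ),
          (∀ j, y j ∈ Y) ∧
          (∀ j : ℤ, y (j + ((N * p : ℕ) : ℤ)) = y j) ∧
          (∀ j : ℤ, dist (x j) (y j) < ε) ∧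
          ∀ lam ∈ Z,
            volume (K ∩ SchrodingerSpectrum (fun n => lam * agg k y n)) ≤
              ENNReal.ofReal (Real.exp (-(c₀ * N))) := by
  classical
  -- finitely many potentials open a gap at every energy and coupling in `K ×ˢ Z`
  have hloc : ∀ z ∈ K ×ˢ Z, ∃ (y : ℤ → (Fin k → ℝ)) (g : ℝ), (∀ j, y j ∈ Y) ∧
      (∀ j : ℤ, dist (x j) (y j) < ε) ∧ 0 < g ∧
      ∀ᶠ z' : ℝ × ℝ in nhds z, LowerBound (fun n => z'.2 * agg k y n) z'.1 g := by
    rintro ⟨E, lam⟩ ⟨hE, hlam⟩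
    exact local_gap (hZ0 lam hlam) (hGR lam hlam) hxY hp hper hε (hKS hE)
  choose! yy gg hyY hyd hgg hnear using hloc
  obtain ⟨t, htKZ, htcov⟩ := (hKc.prod hZc).elim_nhds_subcover
    (fun z => {z' : ℝ × ℝ | LowerBound (fun n => z'.2 * agg k (yy z) n) z'.1 (gg z)})
    (fun z hz => hnear z hz)
  obtain ⟨g, hg, hgle⟩ := exists_pos_le_finset t gg (fun z hz => hgg z (htKZ z hz))
  set M := t.card with hM
  -- enumerate them, continuing with `x` itself beyond the index `M`
  set ys : ℕ → ℤ → (Fin k → ℝ) := fun i =>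
    if h : i < M then yy (t.equivFin.symm ⟨i, h⟩ : t) else x with hys
  have ysY : ∀ i j, ys i j ∈ Y := fun i j => by
    simp only [hys]
    split_ifs with h
    · exact hyY _ (htKZ _ (t.equivFin.symm ⟨i, h⟩).2) j
    · exact hxY j
  have ysd : ∀ i j, dist (x j) (ys i j) < ε := fun i j => by
    simp only [hys]
    split_ifs with h
    · exact hyd _ (htKZ _ (t.equivFin.symm ⟨i, h⟩).2) j
    · simpa using hε
  have yscov : ∀ E ∈ K, ∀ lam ∈ Z, ∃ i < M, LowerBound (fun n => lam * agg k (ys i) n) E g := by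
    intro E hE lam hlam
    have := htcov (Set.mk_mem_prod hE hlam)
    simp only [mem_iUnion] at this
    obtain ⟨z, hz, hL⟩ := this
    refine ⟨t.equivFin ⟨z, hz⟩, (t.equivFin ⟨z, hz⟩).2, ?_⟩
    have e : ys (t.equivFin ⟨z, hz⟩) = yy z := by
      simp only [hys]
      rw [dif_pos (t.equivFin ⟨z, hz⟩).2]
      simp
    rw [e]
    exact LowerBound.mono hL (hgle z hz)
  -- each factor `κ` is gained over two sites on either side of the centre of a stretch; the square
  -- root comes from `δ ^ 2 = 16 κ ^ m`, and `m ≈ N / (8 (M + 1))`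
  set κ := 2 / (2 + g) with hκ
  have hκ0 : 0 < κ := by positivity
  have hκ1 : κ < 1 := by rw [hκ, div_lt_one (by positivity)]; linarith
  obtain ⟨N₁, c₀, hc₀, hrate⟩ := exists_rate (M * (p * k) * 8) (√κ) (by positivity)
    (Real.sqrt_pos.mpr hκ0) ((Real.sqrt_lt' one_pos).mpr (by simpa using hκ1))
    (8 * (M + 1)) (by positivity)
  refine ⟨max N₁ (8 * (M + 1)), c₀, hc₀, fun N hN => ?_⟩
  set m := N / (8 * (M + 1)) with hm
  have hN1 : N₁ ≤ N := le_trans (le_max_left _ _) hN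
  have hN2 : 8 * (M + 1) ≤ N := le_trans (le_max_right _ _) hN
  have hm0 : 0 < m := Nat.div_pos hN2 (by positivity)
  have hmN : 8 * (M + 1) * m ≤ N := Nat.mul_div_le N _
  have hNp : 0 < N * p := Nat.mul_pos (by omega) hp
  have hNp' : ((N * p : ℕ) : ℤ) ≠ 0 := by exact_mod_cast Nat.ne_of_gt hNp
  -- concatenate stretches of length `8mp` of the `ys i` within one period `Np`
  set y : ℤ → (Fin k → ℝ) := fun j =>
    ys ((j % ((N * p : ℕ) : ℤ)) / ((8 * m * p : ℕ) : ℤ)).toNat (j % ((N * p : ℕ) : ℤ)) with hy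
  have hyper : ∀ j : ℤ, y (j + ((N * p : ℕ) : ℤ)) = y j := fun j => by
    simp only [hy, Int.add_emod_right]
  have hxper : ∀ j : ℤ, x (j % ((N * p : ℕ) : ℤ)) = x j := fun j => by
    have hx : Function.Periodic x (p : ℤ) := hper
    rw [Int.emod_def, show ((N * p : ℕ) : ℤ) * (j / ((N * p : ℕ) : ℤ)) =
      (N * (j / ((N * p : ℕ) : ℤ))) * (p : ℤ) by push_cast; ring]
    exact hx.sub_int_mul_eq _
  refine ⟨y, fun j => ysY _ _, hyper, fun j => ?_, fun lam hlam => ?_⟩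
  · rw [← hxper j]; exact ysd _ _
  obtain ⟨B, hB0, hB⟩ : ∃ B : ℝ, 0 ≤ B ∧ ∀ j, ‖y j‖ ≤ B := by
    refine ⟨∑ i ∈ Finset.range (N * p), ‖y i‖, Finset.sum_nonneg fun _ _ => norm_nonneg _,
      fun j => ?_⟩
    have h1 := Int.emod_nonneg j hNp'
    have h2 := Int.emod_lt_of_pos j (by exact_mod_cast hNp : (0 : ℤ) < ((N * p : ℕ) : ℤ))
    have e : y j = y (((j % ((N * p : ℕ) : ℤ)).toNat : ℕ) : ℤ) := by
      rw [Int.toNat_of_nonneg h1]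
      simp only [hy, Int.emod_emod_of_dvd _ (dvd_refl _)]
    rw [e]
    exact Finset.single_le_sum (f := fun i : ℕ => ‖y i‖) (fun _ _ => norm_nonneg _)
      (Finset.mem_range.mpr (by omega))
  have hsq : (√κ ^ m) ^ 2 = κ ^ m := by
    rw [← pow_mul, mul_comm, pow_mul, Real.sq_sqrt hκ0.le]
  have hvol := volume_spectrum_le (W := fun n => lam * agg k y n) (K := K) (B := |lam| * B)
    (q := N * p * k) (m := m) (M := M) (δ := 4 * √κ ^ m)
    (fun n => by
      rw [abs_mul]; exact mul_le_mul_of_nonneg_left (abs_agg_le hB0 hB n) (abs_nonneg _))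
    hg (by positivity) (fun n => by rw [agg_periodic hk hyper])
    (by
      have h1 : N ≤ N * (p * k) := Nat.le_mul_of_pos_right N (Nat.mul_pos hp hk)
      have h2 : 8 * m ≤ 8 * (M + 1) * m := Nat.mul_le_mul_right _ (by omega)
      rw [mul_assoc]; omega)
    (by
      rw [mul_pow, hsq]
      have : 0 < κ ^ m := by positivity
      linarith)
    (fun i n => lam * agg k (ys i) n) (fun i => ((8 * m * p * k * i + 4 * m : ℕ) : ℤ))
    (fun i hi n h1 h2 => by
      obtain ⟨e1, e2⟩ := stretch_index (N := N) hk hp hm0 hi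
        (le_trans (Nat.mul_le_mul_right _ (by omega)) hmN) h1 h2
      rw [agg_congr (y := ys i)]
      simp only [hy]
      rw [e1, e2])
    (fun E hE => yscov E hE lam hlam)
  refine hvol.trans (ENNReal.ofReal_le_ofReal (le_trans (le_of_eq ?_) (hrate N hN1)))
  push_cast
  ring
end
end

section
/- Let Y ⊆ ℝ^k be a closed perfect set and let Z ⊆ ℝ∖{0} be σ-compact. Then the set Q of all y ∈ LP(ℤ,Y) such that the spectrum of H_{λy} has Hausdorff dimension zero for every λ ∈ Z is a Gδ subset of LP(ℤ,Y). -/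
/-!
A set `s ⊆ ℝ` has Hausdorff dimension zero iff for every `n` it has a countable open cover `U` with
`∑ diam (U i) ^ (1 / (n + 1)) < 1 / (n + 1)` (`SmallCover n s`; see `smallCover_of_dimH_eq_zero` and
`dimH_eq_zero_of_smallCover`).

For a bounded potential `W` the spectrum is the Banach algebra spectrum of a bounded operator
depending continuously on `W` (`schrodingerSpectrum_eq`, `continuous_schrodingerOp`). Since the
spectrum is upper hemicontinuous, an open cover of the spectrum still covers the spectrum of nearby
operators, so `SmallCover n` is an open condition on `W` (`isOpen_smallCover_spectrum`), hence an
open condition on `(y, lam)`. Writing `Z` as a countable union of compact sets `K j`, the tube lemma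
shows that `SmallCover n` for all `lam ∈ K j` is an open condition on `y`, and the set in question
is the intersection of these open sets over `j` and `n`.
-/

open Set MeasureTheory BoundedContinuousFunction

noncomputable section

open scoped ENNReal NNReal Topology
open Filter

/-! ### The Schrödinger operator as an element of a Banach algebra -/

lemma memℓp_weightedPerm (σ : ℤ ≃ ℤ) (a : ℤ →ᵇ ℝ) (f : Ell2) :
    Memℓp (fun n : ℤ => a n * f (σ n)) 2 := by
  have hf : Summable fun i => ‖f i‖ ^ (2 : ℝ≥0∞).toReal := (lp.memℓp f).summable (by norm_num)
  refine memℓp_gen ?_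
  refine Summable.of_nonneg_of_le (fun _ => by positivity) (fun n => ?_)
    (((σ.summable_iff).2 hf).mul_left (‖a‖ ^ (2 : ℝ≥0∞).toReal))
  rw [norm_mul, Real.mul_rpow (norm_nonneg _) (norm_nonneg _)]
  simp only [Function.comp]
  gcongr
  exact a.norm_coe_le_norm n

/-- The algebraic bilinear map `(a, f) ↦ (n ↦ a n * f (σ n))` on `ℓ^∞(ℤ) × ℓ²(ℤ)`. -/
def weightedPermLin (σ : ℤ ≃ ℤ) : (ℤ →ᵇ ℝ) →ₗ[ℝ] Ell2 →ₗ[ℝ] Ell2 :=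
  LinearMap.mk₂ ℝ (fun a f => ⟨fun n => a n * f (σ n), memℓp_weightedPerm σ a f⟩)
    (fun a b f => by ext n; exact add_mul (a n) (b n) (f (σ n)))
    (fun c a f => by ext n; simp [mul_assoc])
    (fun a f g => by ext n; exact mul_add (a n) (f (σ n)) (g (σ n)))
    (fun c a f => by ext n; simp [mul_left_comm])

lemma weightedPermLin_norm_le (σ : ℤ ≃ ℤ) (a : ℤ →ᵇ ℝ) (f : Ell2) :
    ‖weightedPermLin σ a f‖ ≤ 1 * ‖a‖ * ‖f‖ := by
  have h2 : 0 < (2 : ℝ≥0∞).toReal := by norm_num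
  have hf : Summable fun i => ‖f i‖ ^ (2 : ℝ≥0∞).toReal := (lp.memℓp f).summable h2
  rw [one_mul]
  refine lp.norm_le_of_tsum_le h2 (by positivity) ?_
  rw [Real.mul_rpow (norm_nonneg _) (norm_nonneg _), lp.norm_rpow_eq_tsum h2 f,
    ← σ.tsum_eq (fun i => ‖f i‖ ^ (2 : ℝ≥0∞).toReal), ← tsum_mul_left]
  refine Summable.tsum_le_tsum (fun n => ?_)
    ((lp.memℓp (weightedPermLin σ a f)).summable h2)
    (((σ.summable_iff).2 hf).mul_left (‖a‖ ^ (2 : ℝ≥0∞).toReal))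
  change ‖a n * f (σ n)‖ ^ _ ≤ _
  rw [norm_mul, Real.mul_rpow (norm_nonneg _) (norm_nonneg _)]
  gcongr
  exact a.norm_coe_le_norm n

/-- For a permutation `σ` of `ℤ`, the continuous bilinear map `(a, f) ↦ (n ↦ a n * f (σ n))`.
Shifts (`a = 1`) and multiplication operators (`σ = 1`) are both of this form. -/
def weightedPerm (σ : ℤ ≃ ℤ) : (ℤ →ᵇ ℝ) →L[ℝ] Ell2 →L[ℝ] Ell2 :=
  (weightedPermLin σ).mkContinuous₂ 1 (weightedPermLin_norm_le σ)

@[simp] lemma weightedPerm_apply (σ : ℤ ≃ ℤ) (a : ℤ →ᵇ ℝ) (f : Ell2) (n : ℤ) :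
    weightedPerm σ a f n = a n * f (σ n) := rfl

/-- The bounded operator `Δ + W` on `ℓ²(ℤ)`. -/
def schrodingerOp (W : ℤ →ᵇ ℝ) : Ell2 →L[ℝ] Ell2 :=
  weightedPerm (Equiv.subRight 1) 1 + weightedPerm (Equiv.addRight 1) 1
    + weightedPerm (Equiv.refl ℤ) W

lemma schrodingerOp_apply (W : ℤ →ᵇ ℝ) (f : Ell2) (n : ℤ) :
    schrodingerOp W f n = f (n - 1) + f (n + 1) + W n * f n := by
  simp [schrodingerOp]

lemma continuous_schrodingerOp : Continuous schrodingerOp := by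
  unfold schrodingerOp
  fun_prop

/-- By the open mapping theorem, a bounded operator is a unit iff it is bijective, so the
algebraic spectrum of `SchrodingerSpectrum` is the Banach algebra spectrum. -/
lemma schrodingerSpectrum_eq (W : ℤ →ᵇ ℝ) :
    SchrodingerSpectrum W = spectrum ℝ (schrodingerOp W) := by
  ext E
  have key : ∀ (f : Ell2) (n : ℤ), (schrodingerOp W - algebraMap ℝ _ E) f n
      = f (n - 1) + f (n + 1) + (W n - E) * f n := by
    intro f n
    have : (schrodingerOp W - algebraMap ℝ (Ell2 →L[ℝ] Ell2) E) f n
        = schrodingerOp W f n - E * f n := by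
      rw [Algebra.algebraMap_eq_smul_one]
      rfl
    rw [this, schrodingerOp_apply]
    ring
  rw [spectrum.mem_iff, ← IsUnit.neg_iff, neg_sub, ContinuousLinearMap.isUnit_iff_bijective]
  refine not_congr ⟨?_, fun h => ?_⟩
  · rintro ⟨T, hT⟩
    have : ⇑(schrodingerOp W - algebraMap ℝ (Ell2 →L[ℝ] Ell2) E) = T := by
      funext f
      ext n
      rw [key, hT]
    rw [this]
    exact T.bijective
  · exact ⟨LinearEquiv.ofBijective
      (schrodingerOp W - algebraMap ℝ (Ell2 →L[ℝ] Ell2) E : Ell2 →L[ℝ] Ell2).toLinearMap h, key⟩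

/-! ### Continuity of aggregation -/

lemma abs_agg_le_s14 (k : ℕ) (x : ℤ →ᵇ (Fin k → ℝ)) (n : ℤ) : ‖agg k x n‖ ≤ ‖x‖ := by
  unfold agg
  split_ifs with h
  · exact (norm_le_pi_norm _ _).trans (x.norm_coe_le_norm _)
  · simp

/-- The aggregation map as a map between spaces of bounded sequences. -/
def aggBdd (k : ℕ) (x : ℤ →ᵇ (Fin k → ℝ)) : ℤ →ᵇ ℝ :=
  BoundedContinuousFunction.ofNormedAddCommGroupDiscrete (agg k x) ‖x‖ (abs_agg_le_s14 k x)

lemma aggBdd_apply (k : ℕ) (x : ℤ →ᵇ (Fin k → ℝ)) (n : ℤ) : aggBdd k x n = agg k x n := rfl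

lemma continuous_aggBdd (k : ℕ) : Continuous (aggBdd k) := by
  refine (LipschitzWith.of_dist_le_mul (K := 1) fun x y => ?_).continuous
  rw [NNReal.coe_one, one_mul, BoundedContinuousFunction.dist_le dist_nonneg]
  intro n
  rw [aggBdd_apply, aggBdd_apply, dist_eq_norm, dist_eq_norm]
  have h : agg k x n - agg k y n = agg k (x - y) n := by
    unfold agg
    split_ifs <;> simp
  rw [h]
  exact abs_agg_le_s14 k (x - y) n

/-! ### Zero Hausdorff dimension through open covers -/

/-- `s` has a countable open cover `U` with `∑ diam (U i) ^ (1 / (n + 1)) < 1 / (n + 1)`. -/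
def SmallCover (n : ℕ) (s : Set ℝ) : Prop :=
  ∃ U : ℕ → Set ℝ, (∀ i, IsOpen (U i)) ∧ s ⊆ ⋃ i, U i ∧
    ∑' i, Metric.ediam (U i) ^ ((n + 1 : ℝ)⁻¹) < ((n : ℝ≥0∞) + 1)⁻¹

/-- A set can be enlarged to an open set with arbitrarily small increase of `diam ^ d`. -/
lemma exists_open_ediam_rpow_le (t : Set ℝ) {d : ℝ} (hd : 0 < d) (ht : Metric.ediam t ≠ ∞)
    {ε : ℝ≥0∞} (hε : 0 < ε) :
    ∃ U : Set ℝ, IsOpen U ∧ t ⊆ U ∧ Metric.ediam U ^ d ≤ Metric.ediam t ^ d + ε := by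
  have hc : Tendsto (fun δ : ℝ≥0 => (Metric.ediam t + 2 * (δ : ℝ≥0∞)) ^ d) (𝓝 0)
      (𝓝 (Metric.ediam t ^ d)) := by
    have h1 : Continuous (fun δ : ℝ≥0 => (Metric.ediam t + 2 * (δ : ℝ≥0∞)) ^ d) :=
      ENNReal.continuous_rpow_const.comp (continuous_const.add
        ((ENNReal.continuous_const_mul (by simp)).comp ENNReal.continuous_coe))
    simpa using h1.tendsto 0
  have hlt : Metric.ediam t ^ d < Metric.ediam t ^ d + ε :=
    ENNReal.lt_add_right (ENNReal.rpow_ne_top_of_nonneg hd.le ht) hε.ne'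
  have hev : ∀ᶠ δ : ℝ≥0 in 𝓝[>] 0,
      (Metric.ediam t + 2 * (δ : ℝ≥0∞)) ^ d < Metric.ediam t ^ d + ε :=
    (hc.mono_left nhdsWithin_le_nhds).eventually_lt_const hlt
  obtain ⟨δ, hδ, hδ0⟩ := (hev.and self_mem_nhdsWithin).exists
  refine ⟨Metric.thickening δ t, Metric.isOpen_thickening,
    Metric.self_subset_thickening (by exact_mod_cast hδ0) t, ?_⟩
  exact (ENNReal.rpow_le_rpow (Metric.ediam_thickening_le δ) hd.le).trans hδ.le

/-- Vanishing of `μH[1 / (n + 1)]` provides efficient covers, which are then enlarged to open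
ones at the cost of a summable error. -/
lemma smallCover_of_dimH_eq_zero {s : Set ℝ} (hs : dimH s = 0) (n : ℕ) : SmallCover n s := by
  set d : ℝ := (n + 1 : ℝ)⁻¹ with hd_def
  have hd : 0 < d := by positivity
  have hμ : μH[d] s = 0 := by
    have hlt : dimH s < (d.toNNReal : ℝ≥0∞) := by
      rw [hs, ENNReal.coe_pos]
      exact Real.toNNReal_pos.2 hd
    have h0 := hausdorffMeasure_of_dimH_lt hlt
    rwa [Real.coe_toNNReal d hd.le] at h0
  set ε : ℝ≥0∞ := ((n : ℝ≥0∞) + 1)⁻¹ with hε_def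
  have hε : 0 < ε := by simp [hε_def]
  have hε2 : 0 < ε / 2 := ENNReal.half_pos hε.ne'
  rw [Measure.hausdorffMeasure_apply] at hμ
  have h1 : (⨅ (t : ℕ → Set ℝ) (_ : s ⊆ ⋃ n, t n) (_ : ∀ n, Metric.ediam (t n) ≤ 1),
      ∑' n, ⨆ _ : (t n).Nonempty, Metric.ediam (t n) ^ d) < ε / 2 := by
    refine lt_of_le_of_lt (le_of_le_of_eq ?_ hμ) hε2
    exact le_iSup₂_of_le 1 one_pos le_rfl
  simp only [iInf_lt_iff] at h1
  obtain ⟨t, hst, hdiam, hsum⟩ := h1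
  obtain ⟨δ, hδ, hδsum⟩ := ENNReal.exists_pos_sum_of_countable' hε2.ne' ℕ
  choose U hUo htU hU using fun i => exists_open_ediam_rpow_le (t i) hd
    (ne_top_of_le_ne_top ENNReal.one_ne_top (hdiam i)) (hδ i)
  refine ⟨U, hUo, hst.trans (iUnion_mono htU), ?_⟩
  have h2 : ∀ i, Metric.ediam (t i) ^ d ≤ ⨆ _ : (t i).Nonempty, Metric.ediam (t i) ^ d := by
    intro i
    rcases (t i).eq_empty_or_nonempty with h | h
    · simp [h, hd]
    · exact le_iSup_of_le h le_rfl
  calc ∑' i, Metric.ediam (U i) ^ d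
      ≤ ∑' i, ((⨆ _ : (t i).Nonempty, Metric.ediam (t i) ^ d) + δ i) :=
        ENNReal.tsum_le_tsum fun i => (hU i).trans (add_le_add_left (h2 i) _)
    _ = (∑' i, ⨆ _ : (t i).Nonempty, Metric.ediam (t i) ^ d) + ∑' i, δ i := ENNReal.tsum_add
    _ < ε / 2 + ε / 2 := ENNReal.add_lt_add hsum hδsum
    _ = ε := ENNReal.add_halves ε

/-- A small sum forces each diameter in the `n`-th cover to be at most `1 / (n + 1) ≤ 1`, so the
`d`-sums are bounded by the `1 / (n + 1)`-sums once `1 / (n + 1) < d`; hence `μH[d] s = 0` for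
every `d > 0`. -/
lemma dimH_eq_zero_of_smallCover {s : Set ℝ} (h : ∀ n, SmallCover n s) : dimH s = 0 := by
  choose U _ hsU hU using h
  have hterm : ∀ n i, Metric.ediam (U n i) ^ ((n + 1 : ℝ)⁻¹) ≤ ((n : ℝ≥0∞) + 1)⁻¹ :=
    fun n i => (ENNReal.le_tsum i).trans (hU n).le
  have hε1 : ∀ n : ℕ, ((n : ℝ≥0∞) + 1)⁻¹ ≤ 1 := fun n => by simp
  have hdiam : ∀ n i, Metric.ediam (U n i) ≤ ((n : ℝ≥0∞) + 1)⁻¹ := by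
    intro n i
    have hn : (0 : ℝ) < n + 1 := by positivity
    calc Metric.ediam (U n i)
        = (Metric.ediam (U n i) ^ ((n + 1 : ℝ)⁻¹)) ^ (n + 1 : ℝ) := by
          rw [← ENNReal.rpow_mul, inv_mul_cancel₀ hn.ne', ENNReal.rpow_one]
      _ ≤ (((n : ℝ≥0∞) + 1)⁻¹) ^ (n + 1 : ℝ) := ENNReal.rpow_le_rpow (hterm n i) hn.le
      _ ≤ (((n : ℝ≥0∞) + 1)⁻¹) ^ (1 : ℝ) :=
          ENNReal.rpow_le_rpow_of_exponent_ge (hε1 n) (by simp)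
      _ = _ := ENNReal.rpow_one _
  have hlim : Tendsto (fun n : ℕ => ((n : ℝ≥0∞) + 1)⁻¹) atTop (𝓝 0) := by
    have := (tendsto_add_atTop_iff_nat 1).2 ENNReal.tendsto_inv_nat_nhds_zero
    simpa using this
  have hμ : ∀ d : ℝ≥0, 0 < d → μH[d] s = 0 := by
    intro d hd
    refine le_antisymm ?_ zero_le
    refine (Measure.hausdorffMeasure_le_liminf_tsum (ι := fun _ : ℕ => ℕ) (d : ℝ) s _ hlim U
      (Eventually.of_forall hdiam) (Eventually.of_forall hsU)).trans ?_
    rw [← hlim.liminf_eq]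
    refine liminf_le_liminf ?_
    have hd' : ∀ᶠ n : ℕ in atTop, (n + 1 : ℝ)⁻¹ < d := by
      have := tendsto_one_div_add_atTop_nhds_zero_nat (𝕜 := ℝ)
      simpa using this.eventually_lt_const (NNReal.coe_pos.2 hd)
    filter_upwards [hd'] with n hn
    exact (ENNReal.tsum_le_tsum fun i => ENNReal.rpow_le_rpow_of_exponent_ge
      ((hdiam n i).trans (hε1 n)) hn.le).trans (hU n).le
  refine le_antisymm (ENNReal.le_of_forall_pos_le_add fun d hd _ => ?_) zero_le
  rw [zero_add]
  exact dimH_le_of_hausdorffMeasure_ne_top (by simp [hμ d hd])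

/-! ### The `Gδ` property -/

/-- The open condition behind the `Gδ` property: small covers of the spectrum persist under
perturbations of the potential. -/
lemma isOpen_smallCover_spectrum (n : ℕ) :
    IsOpen {W : ℤ →ᵇ ℝ | SmallCover n (SchrodingerSpectrum W)} := by
  rw [isOpen_iff_mem_nhds]
  rintro W ⟨U, hUo, hWU, hU⟩
  rw [schrodingerSpectrum_eq] at hWU
  have h1 : ∀ᶠ A in 𝓝 (schrodingerOp W), spectrum ℝ A ⊆ ⋃ i, U i :=
    ((upperHemicontinuous_iff.1 (upperHemicontinuous_spectrum ℝ (Ell2 →L[ℝ] Ell2))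
      (schrodingerOp W)) _ ((isOpen_iUnion hUo).mem_nhdsSet.2 hWU)).mono
      fun A hA => (isOpen_iUnion hUo).mem_nhdsSet.1 hA
  filter_upwards [continuous_schrodingerOp.continuousAt.eventually h1] with V hV
  exact ⟨U, hUo, by rwa [schrodingerSpectrum_eq], hU⟩

/-- For a closed perfect `Y ⊆ ℝ^k` and σ-compact `Z ⊆ ℝ∖{0}`, the set of
`y ∈ LP(ℤ,Y)` such that `σ(H_{λy})` has Hausdorff dimension zero for every
`λ ∈ Z` is a Gδ subset of `LP(ℤ,Y)`. -/
theorem zero_dimH_set_isGδ (k : ℕ) (hk : 0 < k)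
    (Y : Set (Fin k → ℝ)) (hY : Perfect Y)
    (Z : Set ℝ) (hZ0 : ∀ lam ∈ Z, lam ≠ 0) (hZσ : IsSigmaCompact Z) :
    IsGδ {y : LPY k Y |
      ∀ lam ∈ Z,
        dimH (SchrodingerSpectrum
          (fun n => lam * agg k (⇑(y : ℤ →ᵇ (Fin k → ℝ))) n)) = 0} := by
  obtain ⟨K, hK, rfl⟩ := hZσ
  have hcont : Continuous fun p : LPY k Y × ℝ => p.2 • aggBdd k (p.1 : ℤ →ᵇ (Fin k → ℝ)) :=
    continuous_snd.smul ((continuous_aggBdd k).comp (continuous_subtype_val.comp continuous_fst))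
  have hset : {y : LPY k Y | ∀ lam ∈ ⋃ j, K j, dimH (SchrodingerSpectrum
        (fun n => lam * agg k (⇑(y : ℤ →ᵇ (Fin k → ℝ))) n)) = 0}
      = ⋂ (j : ℕ) (n : ℕ), {y : LPY k Y | ∀ lam ∈ K j, SmallCover n (SchrodingerSpectrum
        (lam • aggBdd k (y : ℤ →ᵇ (Fin k → ℝ)) : ℤ →ᵇ ℝ))} := by
    ext y
    simp only [mem_ofPred_eq, mem_iInter, mem_iUnion]
    constructor
    · intro h j n lam hlam
      exact smallCover_of_dimH_eq_zero (h lam ⟨j, hlam⟩) n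
    · rintro h lam ⟨j, hlam⟩
      exact dimH_eq_zero_of_smallCover fun n => h j n lam hlam
  rw [hset]
  refine IsGδ.iInter fun j => IsGδ.iInter fun n => IsOpen.isGδ ?_
  rw [isOpen_iff_mem_nhds]
  intro y hy
  -- The tube lemma: an open condition in `(y, lam)` holding for all `lam ∈ K j` is open in `y`.
  exact (hK j).eventually_forall_of_forall_eventually fun lam hlam =>
    ((isOpen_smallCover_spectrum n).preimage hcont).mem_nhds (hy lam hlam)
end
end
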